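/- arXiv:2502.06108 — 12 statements merged into one kernel-verified Lean document; each statement's English description precedes it below -/
import Mathlib

section
/- Let p be a prime, A a commutative ring on which p is a nonzerodivisor, and φ : A → A a lift of Frobenius, i.e. a ring homomorphism with φ(a) ≡ a^p (mod pA) for all a ∈ A. Then there exists a unique ring homomorphism s_φ : A → W(A) such that gh_n(s_φ(a)) = φ^n(a) for every integer n ≥ 0 and every a ∈ A, where gh_n denotes the n-th ghost component. -/
/-!
The coordinates of `s_φ(a)` are found recursively: given `c_0, …, c_{n-1}` with the right ghost
components below `n`, a suitable `c_n` exists exactly when `p^n` divides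
`φ^n(a) - ∑_{i<n} p^i c_i^{p^{n-i}}`. Applying `φ` to the equation in degree `n - 1` and using
`φ(c)^{p^k} ≡ c^{p^{k+1}} mod p^{k+1}` gives this divisibility (Dwork's lemma,
`pow_dvd_of_ghost` and `exists_ghost`). As `p` is a nonzerodivisor, the ghost map is injective
(`ghost_injective`); hence `a ↦ s_φ(a)` is determined by its ghost components, and it is a ring
homomorphism because each `φ^n` is one.
-/

namespace FrobeniusLiftSection

variable {p : ℕ} {A : Type*} [CommRing A]

lemma ghost_eq_sum [Fact p.Prime] (x : WittVector p A) (n : ℕ) :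
    WittVector.ghostComponent n x =
      ∑ i ∈ Finset.range n, (p : A) ^ i * x.coeff i ^ p ^ (n - i) + (p : A) ^ n * x.coeff n := by
  rw [WittVector.ghostComponent_apply, aeval_wittPolynomial, Finset.sum_range_succ]
  simp

lemma ghost_injective [Fact p.Prime] (hA : (p : A) ∈ nonZeroDivisors A) {x y : WittVector p A}
    (h : ∀ n, WittVector.ghostComponent n x = WittVector.ghostComponent n y) : x = y := by
  ext n
  induction n using Nat.strong_induction_on with
  | _ n ih =>
    have hn := h n
    rw [ghost_eq_sum, ghost_eq_sum, Finset.sum_congr rfl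
      (fun i hi => by rw [ih i (Finset.mem_range.mp hi)])] at hn
    exact (mul_cancel_left_mem_nonZeroDivisors (pow_mem hA n)).mp (add_left_cancel hn)

/-- A choice of coordinates, by recursion on `n`, of a Witt vector with ghost components `g`;
the `n`-th coordinate is `0` if the equation for the `n`-th ghost component has no solution. -/
noncomputable def coords (p : ℕ) (g : ℕ → A) (n : ℕ) : A :=
  open Classical in
  if h : (p : A) ^ n ∣
      g n - ∑ i : Fin n, (p : A) ^ (i : ℕ) * coords p g i ^ p ^ (n - (i : ℕ))
  then h.choose else 0
termination_by n
decreasing_by exact i.2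

lemma coords_spec (g : ℕ → A) (n : ℕ)
    (h : (p : A) ^ n ∣ g n - ∑ i ∈ Finset.range n, (p : A) ^ i * coords p g i ^ p ^ (n - i)) :
    ∑ i ∈ Finset.range n, (p : A) ^ i * coords p g i ^ p ^ (n - i)
      + (p : A) ^ n * coords p g n = g n := by
  rw [← Fin.sum_univ_eq_sum_range
    (fun i => (p : A) ^ i * coords p g i ^ p ^ (n - i))] at h ⊢
  have key : coords p g n = h.choose := by
    rw [coords, dif_pos h]
  rw [key, ← h.choose_spec]
  ring

/-- The congruence making the recursion for the coordinates solvable in degree `n + 1`. -/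
lemma pow_dvd_of_ghost (φ : A →+* A) (hφ : ∀ a : A, (p : A) ∣ (φ a - a ^ p)) (c : ℕ → A) (n : ℕ) :
    (p : A) ^ (n + 1) ∣ φ (∑ i ∈ Finset.range (n + 1), (p : A) ^ i * c i ^ p ^ (n - i))
      - ∑ i ∈ Finset.range (n + 1), (p : A) ^ i * c i ^ p ^ (n + 1 - i) := by
  rw [map_sum, ← Finset.sum_sub_distrib]
  refine Finset.dvd_sum fun i hi => ?_
  have hi' : i ≤ n := Nat.lt_succ_iff.mp (Finset.mem_range.mp hi)
  have h := dvd_sub_pow_of_dvd_sub (hφ (c i)) (n - i)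
  rw [← pow_mul, ← pow_succ'] at h
  have h2 := mul_dvd_mul_left ((p : A) ^ i) h
  rw [← pow_add, mul_sub, show i + (n - i + 1) = n + 1 by omega,
    show n - i + 1 = n + 1 - i by omega] at h2
  simpa using h2

lemma exists_ghost [Fact p.Prime] (φ : A →+* A) (hφ : ∀ a : A, (p : A) ∣ (φ a - a ^ p)) (a : A) :
    ∃ x : WittVector p A, ∀ n, WittVector.ghostComponent n x = φ^[n] a := by
  refine ⟨WittVector.mk p (coords p fun n => φ^[n] a), fun n => ?_⟩
  rw [ghost_eq_sum]
  simp only [WittVector.coeff_mk]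
  induction n with
  | zero => exact coords_spec _ 0 (by simp)
  | succ n ih =>
    apply coords_spec
    have h := pow_dvd_of_ghost φ hφ (coords p fun n => φ^[n] a) n
    rw [Finset.sum_range_succ, Nat.sub_self, pow_zero, pow_one, ih,
      ← Function.iterate_succ_apply' φ n a] at h
    exact h

end FrobeniusLiftSection

open FrobeniusLiftSection in
/-- Let `p` be a prime, `A` a commutative ring on which `p` is a
nonzerodivisor, and `φ : A → A` a lift of Frobenius (`φ a ≡ a^p mod pA`).  Then there
is a unique ring homomorphism `s_φ : A → W(A)` whose `n`-th ghost component is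
`φ^n(a)` for all `n ≥ 0` and `a : A`. -/
theorem exists_unique_frobeniusLift_section (p : ℕ) [Fact p.Prime] (A : Type*) [CommRing A]
    (hA : (p : A) ∈ nonZeroDivisors A)
    (φ : A →+* A) (hφ : ∀ a : A, (p : A) ∣ (φ a - a ^ p)) :
    ∃! s : A →+* WittVector p A,
      ∀ (n : ℕ) (a : A), WittVector.ghostComponent n (s a) = φ^[n] a := by
  choose s hs using exists_ghost (p := p) φ hφ
  refine ⟨{ toFun := s, map_one' := ?_, map_mul' := ?_, map_zero' := ?_, map_add' := ?_ },
    fun n a => hs a n, fun t ht => ?_⟩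
  · exact ghost_injective hA fun n => by rw [hs, map_one, iterate_map_one]
  · exact fun a b => ghost_injective hA fun n => by rw [map_mul, hs, hs, hs, iterate_map_mul]
  · exact ghost_injective hA fun n => by rw [hs, map_zero, iterate_map_zero]
  · exact fun a b => ghost_injective hA fun n => by rw [map_add, hs, hs, hs, iterate_map_add]
  · ext1 a
    exact ghost_injective hA fun n => (ht n a).trans (hs a n).symm
end

section
/- Let p be a prime, A a commutative ring on which p is a nonzerodivisor, and φ : A → A a lift of Frobenius. Then there is a unique map Δ : W(A) → W(A) such that V(Δ(α)) = α − s_φ(α_0) for every α = (α_0, α_1, …) ∈ W(A), and Δ satisfies: (i) Δ is a homomorphism of additive groups; (ii) Δ(s_φ(a)) = 0 for all a ∈ A; (iii) Δ(V(α)) = α for all α ∈ W(A); (iv) for all α, β ∈ W(A), Δ(α·β) = s_φ(φ(β_0))·Δ(α) + s_φ(φ(α_0))·Δ(β) + p·Δ(α)·Δ(β), where α_0, β_0 denote the 0-th components. -/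
/-!
Since `p` is a nonzerodivisor, Witt vectors over `A` are determined by their ghost components
(`eq_of_ghostComponent_eq`), and comparing these shows `F ∘ s = s ∘ φ`, where `F` is the Witt
vector Frobenius (`frobenius_section`). The vector `α - s α₀` has vanishing constant coefficient,
so it equals `V x` for a unique `x`, and `Δ α` has to be this `x`.

All properties of `Δ` are checked after applying the injective additive map `V`. For the product
rule, write `α = s a + V x` and `β = s b + V y`. Then
`αβ - s (ab) = V x * s b + V y * s a + V x * V y`, and the projection formula
`V (u * F v) = V u * v` together with `F ∘ s = s ∘ φ` and `F ∘ V = p` turns the three terms into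
`V (x * s (φ b))`, `V (y * s (φ a))` and `V (x * (y * p))`.
-/

open WittVector in
theorem eq_of_ghostComponent_eq {p : ℕ} [Fact p.Prime] {A : Type*} [CommRing A]
    (hA : (p : A) ∈ nonZeroDivisors A) {x y : WittVector p A}
    (h : ∀ n, ghostComponent n x = ghostComponent n y) : x = y := by
  ext n
  induction n using Nat.strong_induction_on with
  | _ n ih =>
    have hn := h n
    rw [ghostComponent_apply, ghostComponent_apply, aeval_wittPolynomial, aeval_wittPolynomial,
      Finset.sum_range_succ, Finset.sum_range_succ,
      Finset.sum_congr rfl fun i hi => by rw [ih i (Finset.mem_range.mp hi)]] at hn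
    -- the lower terms agree, leaving `p ^ n * xₙ = p ^ n * yₙ`
    have hn' : (p : A) ^ n * x.coeff n = (p : A) ^ n * y.coeff n := by
      simpa using hn
    exact (mul_cancel_left_mem_nonZeroDivisors (pow_mem hA n)).mp hn'

open WittVector in
theorem frobenius_section {p : ℕ} [Fact p.Prime] {A : Type*} [CommRing A]
    (hA : (p : A) ∈ nonZeroDivisors A) (φ : A →+* A) (s : A →+* WittVector p A)
    (hs : ∀ (n : ℕ) (a : A), ghostComponent n (s a) = φ^[n] a) (a : A) :
    frobenius (s a) = s (φ a) := by
  refine eq_of_ghostComponent_eq hA fun n => ?_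
  rw [ghostComponent_frobenius, hs, hs, Function.iterate_succ_apply]

open WittVector in
theorem exists_verschiebung_eq {p : ℕ} [Fact p.Prime] {A : Type*} [CommRing A]
    (x : WittVector p A) (hx : x.coeff 0 = 0) : ∃ y, verschiebung y = x := by
  refine ⟨WittVector.mk p fun n => x.coeff (n + 1), ?_⟩
  ext n
  cases n with
  | zero => rw [verschiebung_coeff_zero, hx]
  | succ n => rw [verschiebung_coeff_add_one, coeff_mk]

/-- Let `p` be a prime, `A` a commutative ring on which `p` is a
nonzerodivisor, `φ` a lift of Frobenius on `A` and `s_φ : A → W(A)` the unique ring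
homomorphism with `gh_n (s_φ a) = φ^n a`.  There is a unique map `Δ : W(A) → W(A)`
with `V(Δ α) = α - s_φ(α₀)` for all `α`, and it satisfies:
(i) `Δ` is additive; (ii) `Δ (s_φ a) = 0`; (iii) `Δ (V α) = α`;
(iv) `Δ(αβ) = s_φ(φ β₀) Δα + s_φ(φ α₀) Δβ + p Δα Δβ`. -/
theorem exists_unique_deltaMap (p : ℕ) [Fact p.Prime] (A : Type*) [CommRing A]
    (hA : (p : A) ∈ nonZeroDivisors A)
    (φ : A →+* A) (hφ : ∀ a : A, (p : A) ∣ (φ a - a ^ p))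
    (s : A →+* WittVector p A)
    (hs : ∀ (n : ℕ) (a : A), WittVector.ghostComponent n (s a) = φ^[n] a) :
    ∃! Δ : WittVector p A → WittVector p A,
      (∀ α : WittVector p A, WittVector.verschiebung (Δ α) = α - s (α.coeff 0)) ∧
      (∀ α β : WittVector p A, Δ (α + β) = Δ α + Δ β) ∧
      (∀ a : A, Δ (s a) = 0) ∧
      (∀ α : WittVector p A, Δ (WittVector.verschiebung α) = α) ∧
      (∀ α β : WittVector p A,
        Δ (α * β) = s (φ (β.coeff 0)) * Δ α + s (φ (α.coeff 0)) * Δ β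
          + p * (Δ α * Δ β)) := by
  have coeff_s : ∀ a, (s a).coeff 0 = a := fun a => by
    simpa [WittVector.ghostComponent_apply] using hs 0 a
  have coeff_add : ∀ x y : WittVector p A, (x + y).coeff 0 = x.coeff 0 + y.coeff 0 :=
    map_add WittVector.constantCoeff
  have coeff_sub : ∀ x y : WittVector p A, (x - y).coeff 0 = x.coeff 0 - y.coeff 0 :=
    map_sub WittVector.constantCoeff
  have coeff_mul : ∀ x y : WittVector p A, (x * y).coeff 0 = x.coeff 0 * y.coeff 0 :=
    map_mul WittVector.constantCoeff
  have hinj := WittVector.verschiebung_injective p A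
  have hex : ∀ α : WittVector p A, ∃ x, WittVector.verschiebung x = α - s (α.coeff 0) :=
    fun α => exists_verschiebung_eq _ (by rw [coeff_sub, coeff_s, sub_self])
  choose Δ hΔ using hex
  refine ⟨Δ, ⟨hΔ, fun α β => hinj ?_, fun a => hinj ?_, fun α => hinj ?_, fun α β => hinj ?_⟩,
    fun Δ' h => funext fun α => hinj ((h.1 α).trans (hΔ α).symm)⟩
  · rw [map_add, hΔ, hΔ, hΔ, coeff_add, map_add]
    ring
  · rw [hΔ, coeff_s, sub_self, map_zero]
  · rw [hΔ, WittVector.verschiebung_coeff_zero, map_zero, sub_zero]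
  · have hsF := frobenius_section hA φ s hs
    have h1 : WittVector.verschiebung (s (φ (β.coeff 0)) * Δ α)
        = (α - s (α.coeff 0)) * s (β.coeff 0) := by
      rw [← hΔ, ← hsF, mul_comm, WittVector.verschiebung_mul_frobenius]
    have h2 : WittVector.verschiebung (s (φ (α.coeff 0)) * Δ β)
        = (β - s (β.coeff 0)) * s (α.coeff 0) := by
      rw [← hΔ, ← hsF, mul_comm, WittVector.verschiebung_mul_frobenius]
    have h3 : WittVector.verschiebung ((p : WittVector p A) * (Δ α * Δ β))
        = (α - s (α.coeff 0)) * (β - s (β.coeff 0)) := by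
      rw [← hΔ, ← hΔ, ← WittVector.verschiebung_mul_frobenius,
        WittVector.frobenius_verschiebung]
      congr 1
      ring
    rw [map_add, map_add, h1, h2, h3, hΔ, coeff_mul, map_mul]
    ring
end

section
/- Let p be a prime, A a commutative ring on which p is a nonzerodivisor, and φ : A → A a lift of Frobenius. Then for every a ∈ A there exists a unique sequence (Δ_s(a))_{s≥0} of elements of A such that Δ_0(a) = a and a^{p^m} = Σ_{s=0}^{m} p^s · φ^{m−s}(Δ_s(a)) for every integer m ≥ 0. Moreover, this sequence satisfies p^n · Δ_n(a) = a^{p^n} − φ(a^{p^{n−1}}) for every integer n ≥ 1 (equivalently, Δ_n(a) = Δ_1(a^{p^{n−1}})/p^{n−1}). -/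
/-!
Applying `φ` to the `m`-th ghost equation and subtracting it from the `(m+1)`-st cancels every
term except the last one, so (`ghostSum_succ`) the whole system of equations is equivalent to
`Δ 0 = a` together with `p ^ (k+1) * Δ (k+1) = a ^ p ^ (k+1) - φ (a ^ p ^ k)` for all `k`.
Uniqueness follows because `p` is a nonzerodivisor. For existence, the right-hand side is
divisible by `p ^ (k+1)`: raising the congruence `φ a ≡ a ^ p` mod `p` to the power `p ^ k` gives a
congruence mod `p ^ (k+1)` (`dvd_sub_pow_of_dvd_sub`).
-/

lemma ghostSum_succ {A : Type*} [CommRing A] (p : ℕ) (φ : A →+* A) (Δ : ℕ → A) (m : ℕ) :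
    ∑ s ∈ Finset.range (m + 1 + 1), (p : A) ^ s * φ^[m + 1 - s] (Δ s)
      = φ (∑ s ∈ Finset.range (m + 1), (p : A) ^ s * φ^[m - s] (Δ s))
        + (p : A) ^ (m + 1) * Δ (m + 1) := by
  rw [Finset.sum_range_succ, map_sum]
  congr 1
  · refine Finset.sum_congr rfl fun s hs => ?_
    have hs : s ≤ m := Nat.lt_succ_iff.mp (Finset.mem_range.mp hs)
    rw [Nat.sub_add_comm hs, Function.iterate_succ_apply', map_mul, map_pow, map_natCast]
  · simp

/-- The ghost equations are equivalent to explicit formulas for each `p ^ n * Δ n`, `n ≥ 1`. -/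
lemma ghost_iff {A : Type*} [CommRing A] (p : ℕ) (φ : A →+* A) (a : A) (Δ : ℕ → A) :
    (Δ 0 = a ∧ ∀ m : ℕ, a ^ p ^ m
        = ∑ s ∈ Finset.range (m + 1), (p : A) ^ s * φ^[m - s] (Δ s)) ↔
    (Δ 0 = a ∧ ∀ k : ℕ, (p : A) ^ (k + 1) * Δ (k + 1) = a ^ p ^ (k + 1) - φ (a ^ p ^ k)) := by
  refine and_congr_right fun h0 => ⟨fun h k => ?_, fun h m => ?_⟩
  · have h1 := h (k + 1)
    rw [ghostSum_succ, ← h k] at h1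
    rw [h1]
    ring
  · induction m with
    | zero => simp [h0]
    | succ m ih =>
      rw [ghostSum_succ, ← ih, h m]
      ring

/-- Let `p` be a prime, `A` a commutative ring on which `p` is a
nonzerodivisor, and `φ` a lift of Frobenius on `A`.  Then for every `a : A` there is a
unique sequence `(Δ_s(a))_{s ≥ 0}` with `Δ_0(a) = a` and
`a^{p^m} = ∑_{s=0}^m p^s φ^{m-s}(Δ_s(a))` for all `m ≥ 0`; moreover this sequence
satisfies `p^n Δ_n(a) = a^{p^n} - φ(a^{p^{n-1}})` for all `n ≥ 1`. -/
theorem exists_unique_deltaSeq (p : ℕ) [Fact p.Prime] (A : Type*) [CommRing A]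
    (hA : (p : A) ∈ nonZeroDivisors A)
    (φ : A →+* A) (hφ : ∀ a : A, (p : A) ∣ (φ a - a ^ p)) (a : A) :
    (∃! Δ : ℕ → A, Δ 0 = a ∧
        ∀ m : ℕ, a ^ p ^ m
          = ∑ s ∈ Finset.range (m + 1), (p : A) ^ s * φ^[m - s] (Δ s)) ∧
    (∀ Δ : ℕ → A,
      (Δ 0 = a ∧ ∀ m : ℕ, a ^ p ^ m
          = ∑ s ∈ Finset.range (m + 1), (p : A) ^ s * φ^[m - s] (Δ s)) →
      ∀ n : ℕ, 1 ≤ n → (p : A) ^ n * Δ n = a ^ p ^ n - φ (a ^ p ^ (n - 1))) := by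
  simp only [ghost_iff]
  have hdvd : ∀ k : ℕ, (p : A) ^ (k + 1) ∣ a ^ p ^ (k + 1) - φ (a ^ p ^ k) := fun k => by
    have h := dvd_sub_pow_of_dvd_sub (hφ a) k
    rw [← pow_mul, ← pow_succ', ← map_pow] at h
    exact (dvd_sub_comm).mp h
  refine ⟨?_, ?_⟩
  · choose d hd using hdvd
    refine ⟨fun n => Nat.casesOn n a d, ⟨rfl, fun k => (hd k).symm⟩, ?_⟩
    rintro Δ ⟨h0, h⟩
    funext n
    cases n with
    | zero => exact h0
    | succ k =>
      exact (mul_cancel_left_mem_nonZeroDivisors (pow_mem hA (k + 1))).mp ((h k).trans (hd k))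
  · rintro Δ ⟨-, h⟩ n hn
    obtain ⟨k, rfl⟩ := Nat.exists_eq_add_of_le' hn
    exact h k
end

section
/- Let p be a prime, A a commutative ring on which p is a nonzerodivisor, and φ : A → A a lift of Frobenius. Let a ∈ A and let n ≥ 2 be an integer. If p is odd, then Δ_n(a) ≡ a^{p^n − p} · Δ_1(a) (mod pA); if p = 2, then Δ_n(a) ≡ a^{p^n − p} · Δ_1(a) + a^{p^n − 2p} · Δ_1(a)^p (mod pA). -/
/-!
Subtracting `φ` of the defining relation for `m - 1` from the one for `m` gives
`p ^ m * Δ m = a ^ p ^ m - φ a ^ p ^ (m - 1)`, and `φ a = a ^ p - p * Δ 1`. So the claim is the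
expansion of `(x - p d) ^ p ^ r` modulo `p ^ (r + 2)`, with `x = a ^ p`, `d = Δ 1`, `r = n - 1`.

This expansion is obtained by repeatedly raising to the `p`-th power (`pow_step`):
`(X - p ^ (r + 1) Y) ^ p ≡ X ^ p - p ^ (r + 2) X ^ (p - 1) Y` modulo `p ^ (r + 3)`, which holds if
`p` is odd or `r ≥ 1`. For odd `p` the iteration starts at `r = 0` from `x - p d`; for `p = 2` it
starts at `r = 1` from `(x - 2 d) ^ 2 = x ^ 2 - 4 (x d - d ^ 2)`, whose extra term `d ^ 2` is the
source of the additional summand.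
-/

/-- The exceptional case `p = 2`, `r = 0` is the one where the last binomial term
`p ^ ((r + 1) * p) * Y ^ p` is not divisible by `p ^ (r + 3)`. -/
lemma pow_step (p : ℕ) (hp : p.Prime) {A : Type*} [CommRing A] (r : ℕ) (h : p ≠ 2 ∨ 1 ≤ r)
    (X Y : A) :
    (p : A) ^ (r + 3) ∣
      (X - (p : A) ^ (r + 1) * Y) ^ p - (X ^ p - (p : A) ^ (r + 2) * (X ^ (p - 1) * Y)) := by
  obtain ⟨q, rfl⟩ : ∃ q, p = q + 1 := ⟨p - 1, by have := hp.pos; omega⟩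
  set P : A := ((q + 1 : ℕ) : A) with hP
  have e : (X - P ^ (r + 1) * Y) ^ (q + 1) - (X ^ (q + 1) - P ^ (r + 2) * (X ^ (q + 1 - 1) * Y))
      = ∑ k ∈ Finset.range q, (-(P ^ (r + 1) * Y)) ^ (k + 1 + 1) * X ^ (q + 1 - (k + 1 + 1))
          * ((q + 1).choose (k + 1 + 1) : A) := by
    rw [sub_eq_neg_add X, add_pow, Finset.sum_range_succ', Finset.sum_range_succ']
    simp only [zero_add, pow_zero, pow_one, Nat.choose_zero_right, Nat.choose_one_right,
      Nat.sub_zero, ← hP, Nat.add_sub_cancel]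
    push_cast
    ring
  rw [e]
  refine Finset.dvd_sum fun k hk => ?_
  have hk := Finset.mem_range.1 hk
  rw [neg_pow, mul_pow, ← pow_mul]
  rcases Nat.lt_or_ge (k + 2) (q + 1) with hlt | hge
  · obtain ⟨c, hc⟩ := hp.dvd_choose_self (k := k + 1 + 1) (by omega) hlt
    have h2 : P ^ (r + 3) ∣ P ^ ((r + 1) * (k + 1 + 1) + 1) := pow_dvd_pow _ (by nlinarith)
    refine h2.trans ⟨(-1) ^ (k + 1 + 1) * Y ^ (k + 1 + 1) * X ^ (q + 1 - (k + 1 + 1)) * (c : A), ?_⟩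
    rw [hc, Nat.cast_mul, ← hP]
    ring
  · have h2 : P ^ (r + 3) ∣ P ^ ((r + 1) * (k + 1 + 1)) := by
      refine pow_dvd_pow _ ?_
      rcases h with h | h
      · have : 1 ≤ k := by omega
        nlinarith
      · nlinarith
    exact Dvd.dvd.mul_right (Dvd.dvd.mul_right (Dvd.dvd.mul_left (h2.mul_right _) _) _) _

/-- If `u ^ p ^ r` has a first-order term `p ^ (r + 1) * Y₀` relative to `x ^ p ^ r`, then modulo the
next power of `p` each further `p`-th power multiplies that term by `p` times a power of `x`. -/
lemma pow_iter (p : ℕ) (hp : p.Prime) {A : Type*} [CommRing A] (r : ℕ) (h : p ≠ 2 ∨ 1 ≤ r)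
    (u x Y₀ : A) (h₀ : u ^ p ^ r = x ^ p ^ r - (p : A) ^ (r + 1) * Y₀) (k : ℕ) :
    ∃ Y : A, u ^ p ^ (r + k) = x ^ p ^ (r + k) - (p : A) ^ (r + k + 1) * Y ∧
      (p : A) ∣ Y - x ^ (p ^ (r + k) - p ^ r) * Y₀ := by
  induction k with
  | zero => exact ⟨Y₀, by simpa using h₀, by simp⟩
  | succ k ih =>
    obtain ⟨Y, hY, c, hc⟩ := ih
    obtain ⟨b, hb⟩ := pow_step p hp (r + k) (h.imp_right (by omega)) (x ^ p ^ (r + k)) Y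
    refine ⟨(x ^ p ^ (r + k)) ^ (p - 1) * Y - p * b, ?_, (x ^ p ^ (r + k)) ^ (p - 1) * c - b, ?_⟩
    · rw [← add_assoc, pow_succ p, pow_mul, pow_mul, hY]
      linear_combination hb
    · have e : p ^ (r + (k + 1)) - p ^ r = p ^ (r + k) * (p - 1) + (p ^ (r + k) - p ^ r) := by
        obtain ⟨q, rfl⟩ : ∃ q, p = q + 1 := ⟨p - 1, by have := hp.pos; omega⟩
        have h1 : (q + 1) ^ r ≤ (q + 1) ^ (r + k) := Nat.pow_le_pow_right (by omega) (by omega)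
        rw [← add_assoc, pow_succ _ (r + k), Nat.add_sub_cancel, mul_add, mul_one]
        omega
      rw [e, pow_add x, pow_mul]
      linear_combination (x ^ p ^ (r + k)) ^ (p - 1) * hc

/-- Let `p` be a prime, `A` a commutative ring on which `p` is a
nonzerodivisor, `φ` a lift of Frobenius on `A`, `a : A`, and `n ≥ 2`.  Let `(Δ_s(a))`
be the (unique) sequence with `Δ_0(a) = a` and
`a^{p^m} = ∑_{s=0}^m p^s φ^{m-s}(Δ_s(a))` for all `m`.  If `p` is odd then
`Δ_n(a) ≡ a^{p^n - p} Δ_1(a) (mod pA)`; if `p = 2` then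
`Δ_n(a) ≡ a^{p^n - p} Δ_1(a) + a^{p^n - 2p} Δ_1(a)^p (mod pA)`. -/
theorem deltaSeq_congr_mod_p (p : ℕ) [Fact p.Prime] (A : Type*) [CommRing A]
    (hA : (p : A) ∈ nonZeroDivisors A)
    (φ : A →+* A) (hφ : ∀ a : A, (p : A) ∣ (φ a - a ^ p))
    (a : A) (n : ℕ) (hn : 2 ≤ n) (Δ : ℕ → A) (hΔ0 : Δ 0 = a)
    (hΔ : ∀ m : ℕ, a ^ p ^ m
        = ∑ s ∈ Finset.range (m + 1), (p : A) ^ s * φ^[m - s] (Δ s)) :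
    (p ≠ 2 → (p : A) ∣ (Δ n - a ^ (p ^ n - p) * Δ 1)) ∧
    (p = 2 → (p : A) ∣ (Δ n - (a ^ (p ^ n - p) * Δ 1 + a ^ (p ^ n - 2 * p) * (Δ 1) ^ p))) := by
  have hp : p.Prime := Fact.out
  have hφa : φ a = a ^ p - p * Δ 1 := by
    have := hΔ 1
    simp [Finset.sum_range_succ, hΔ0] at this
    linear_combination -this
  have hrec : ∀ r, (p : A) ^ (r + 1) * Δ (r + 1) = (a ^ p) ^ p ^ r - (φ a) ^ p ^ r := by
    intro r
    have h1 := hΔ (r + 1)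
    have h2 := congrArg φ (hΔ r)
    rw [Finset.sum_range_succ] at h1
    rw [map_pow, map_sum] at h2
    have h3 : ∀ s ∈ Finset.range (r + 1), φ ((p : A) ^ s * φ^[r - s] (Δ s))
        = (p : A) ^ s * φ^[r + 1 - s] (Δ s) := by
      intro s hs
      have hs := Finset.mem_range.1 hs
      rw [map_mul, map_pow, map_natCast, ← Function.iterate_succ_apply' (⇑φ)]
      congr 3
      omega
    rw [Finset.sum_congr rfl h3] at h2
    simp only [Nat.sub_self, Function.iterate_zero, id] at h1
    rw [← pow_mul, ← pow_succ']
    linear_combination h2 - h1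
  -- Cancelling the power of `p` identifies `Δ (r + 1)` with the coefficient from `pow_iter`.
  have hcancel : ∀ r (Y : A), φ a ^ p ^ r = (a ^ p) ^ p ^ r - (p : A) ^ (r + 1) * Y →
      Δ (r + 1) = Y := by
    intro r Y h
    refine (mul_cancel_left_mem_nonZeroDivisors (pow_mem hA (r + 1))).1 ?_
    rw [hrec, h]
    ring
  refine ⟨fun h2 => ?_, fun h2 => ?_⟩
  · obtain ⟨k, rfl⟩ : ∃ k, n = k + 1 := ⟨n - 1, by omega⟩
    obtain ⟨Y, hY, hd⟩ := pow_iter p hp 0 (Or.inl h2) (φ a) (a ^ p) (Δ 1) (by simpa using hφa) k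
    rw [zero_add] at hY hd
    rw [hcancel k Y hY]
    rwa [← pow_mul, Nat.mul_sub, ← pow_succ', pow_zero, mul_one] at hd
  · obtain ⟨k, rfl⟩ : ∃ k, n = 1 + k + 1 := ⟨n - 2, by omega⟩
    obtain ⟨Y, hY, hd⟩ := pow_iter p hp 1 (Or.inr le_rfl) (φ a) (a ^ p)
      (a ^ p * Δ 1 - Δ 1 ^ 2) (by rw [hφa]; subst h2; push_cast; ring) k
    rw [hcancel (1 + k) Y hY]
    obtain ⟨c, hc⟩ := hd
    subst h2
    have e1 : 2 ^ (1 + k + 1) - 2 = 2 * (2 ^ (1 + k) - 2 ^ 1) + 2 := by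
      have : 2 ^ 1 ≤ 2 ^ (1 + k) := Nat.pow_le_pow_right (by omega) (by omega)
      rw [pow_succ 2 (1 + k)]
      omega
    have e2 : 2 ^ (1 + k + 1) - 2 * 2 = 2 * (2 ^ (1 + k) - 2 ^ 1) := by
      rw [pow_succ 2 (1 + k)]
      omega
    rw [← pow_mul] at hc
    rw [e1, e2, pow_add]
    -- The signs of the `Δ 1 ^ 2` terms differ, which is harmless modulo `2`.
    refine ⟨c - a ^ (2 * (2 ^ (1 + k) - 2 ^ 1)) * Δ 1 ^ 2, ?_⟩
    push_cast at hc ⊢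
    linear_combination hc
end

section
/- Let p be a prime, A a commutative ring on which p is a nonzerodivisor, and φ : A → A a lift of Frobenius. Regard W_n(A) as an A-module via the ring homomorphism A → W(A) → W_n(A) induced by s_φ. Then for every integer n ≥ 1, the map Ψ_n : W_n(A) → A^n defined on components by Ψ_n((a_0,…,a_{n−1}))_i = Σ_{j=0}^{i} Δ_{i−j}(a_j) (for 0 ≤ i ≤ n−1, with Δ_0 = id) is an additive bijection, and it is semilinear in the sense that Ψ_n(s_φ(a) · x)_i = φ^i(a) · Ψ_n(x)_i for every a ∈ A, x ∈ W_n(A) and 0 ≤ i ≤ n−1. In other words, Ψ_n is an isomorphism of A-modules W_n(A) ≅ A ⊕ φ_*A ⊕ ⋯ ⊕ φ^{n−1}_*A, where φ^i_*A denotes A with A-module structure twisted by φ^i. -/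
/-!
Extend the formula for `Ψ_n` to all Witt vectors: `psi Δ x i = ∑_{j ≤ i} Δ_{i-j}(x_j)`. Inserting the
defining identity of `Δ` into the ghost components gives (`ghostComponent_eq_twistedGhost`)
`gh_m(x) = ∑_{i ≤ m} p^i φ^{m-i}(psi Δ x i)`.
The right-hand side is additive in the sequence `psi Δ x`, multiplying `psi Δ x i` by `φ^i(a)` for
all `i` multiplies it by `φ^m(a)`, and, since `p` is a nonzerodivisor, it determines the sequence
(`twistedGhost_injective`; the system is triangular with diagonal entries `p^m`). As `gh_m` is a
ring homomorphism with `gh_m(s a) = φ^m(a)`, additivity and semilinearity of `psi` follow.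

Bijectivity holds because `psi` is triangular in the Witt coordinates with identity diagonal:
`psi Δ x i = x_i + (terms in x_j, j < i)`, as `Δ_0 = id`.
-/

/-- The map `Ψ` in all degrees at once: `psi Δ c i = ∑_{j ≤ i} Δ_{i-j}(c_j)`, as a function of the
sequence `c` of Witt coordinates. -/
def psi {A : Type*} [CommRing A] (Δ : A → ℕ → A) (c : ℕ → A) (i : ℕ) : A :=
  ∑ j ∈ Finset.range (i + 1), Δ (c j) (i - j)

/-- The `φ`-twisted ghost map `b ↦ ∑_{i ≤ m} p^i φ^{m-i}(b_i)`. -/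
def twistedGhost {A : Type*} [CommRing A] (p : ℕ) (φ : A →+* A) (b : ℕ → A) (m : ℕ) : A :=
  ∑ i ∈ Finset.range (m + 1), (p : A) ^ i * φ^[m - i] (b i)

theorem twistedGhost_injective {A : Type*} [CommRing A] {p : ℕ}
    (hA : (p : A) ∈ nonZeroDivisors A) (φ : A →+* A) :
    Function.Injective (twistedGhost p φ) := by
  intro b c h
  funext m
  induction m using Nat.strong_induction_on with
  | _ m ih =>
    have hm := congrFun h m
    simp only [twistedGhost, Finset.sum_range_succ, Nat.sub_self, Function.iterate_zero, id] at hm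
    rw [Finset.sum_congr rfl fun i hi => by rw [ih i (Finset.mem_range.1 hi)]] at hm
    exact (mul_cancel_left_mem_nonZeroDivisors (pow_mem hA m)).1 (add_left_cancel hm)

theorem twistedGhost_add {A : Type*} [CommRing A] (p : ℕ) (φ : A →+* A) (b c : ℕ → A) :
    twistedGhost p φ (b + c) = twistedGhost p φ b + twistedGhost p φ c := by
  funext m
  simp only [twistedGhost, Pi.add_apply, iterate_map_add, mul_add, Finset.sum_add_distrib]

theorem twistedGhost_semilinear {A : Type*} [CommRing A] (p : ℕ) (φ : A →+* A) (a : A)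
    (b : ℕ → A) (m : ℕ) :
    twistedGhost p φ (fun i => φ^[i] a * b i) m = φ^[m] a * twistedGhost p φ b m := by
  simp only [twistedGhost, Finset.mul_sum]
  refine Finset.sum_congr rfl fun i hi => ?_
  have hi' : m - i + i = m := Nat.sub_add_cancel (Nat.lt_succ_iff.1 (Finset.mem_range.1 hi))
  rw [iterate_map_mul, ← Function.iterate_add_apply, hi']
  ring

/-- The ghost components of `x` are the twisted ghost components of `psi Δ x`. -/
theorem ghostComponent_eq_twistedGhost {p : ℕ} [Fact p.Prime] {A : Type*} [CommRing A]
    (φ : A →+* A) (Δ : A → ℕ → A)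
    (hΔ : ∀ (x : A) (m : ℕ), x ^ p ^ m
        = ∑ t ∈ Finset.range (m + 1), (p : A) ^ t * φ^[m - t] (Δ x t))
    (x : WittVector p A) (m : ℕ) :
    WittVector.ghostComponent m x = twistedGhost p φ (psi Δ x.coeff) m := by
  have hflip := Finset.sum_range_diag_flip (m + 1)
    fun j t => (p : A) ^ (j + t) * φ^[m - (j + t)] (Δ (x.coeff j) t)
  have hR : twistedGhost p φ (psi Δ x.coeff) m = ∑ i ∈ Finset.range (m + 1),
      ∑ j ∈ Finset.range (i + 1), (p : A) ^ (j + (i - j)) *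
        φ^[m - (j + (i - j))] (Δ (x.coeff j) (i - j)) := by
    refine Finset.sum_congr rfl fun i _ => ?_
    rw [psi, ← RingHom.coe_pow, map_sum, Finset.mul_sum]
    refine Finset.sum_congr rfl fun j hj => ?_
    rw [Nat.add_sub_cancel' (Nat.lt_succ_iff.1 (Finset.mem_range.1 hj)), RingHom.coe_pow]
  rw [hR, hflip, WittVector.ghostComponent_apply, aeval_wittPolynomial]
  refine Finset.sum_congr rfl fun j hj => ?_
  have hj' : m + 1 - j = m - j + 1 := by have := Finset.mem_range.1 hj; omega
  rw [hΔ, Finset.mul_sum, hj']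
  refine Finset.sum_congr rfl fun t _ => ?_
  rw [pow_add, mul_assoc, Nat.sub_sub]

theorem psi_eq_add {A : Type*} [CommRing A] {Δ : A → ℕ → A} (hΔ0 : ∀ x : A, Δ x 0 = x)
    (c : ℕ → A) (i : ℕ) :
    psi Δ c i = (∑ j ∈ Finset.range i, Δ (c j) (i - j)) + c i := by
  rw [psi, Finset.sum_range_succ, Nat.sub_self, hΔ0]

/-- The first `n` values of `psi` determine the first `n` coordinates, by triangularity. -/
theorem psi_inj {A : Type*} [CommRing A] {Δ : A → ℕ → A} (hΔ0 : ∀ x : A, Δ x 0 = x)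
    {c d : ℕ → A} {n : ℕ} (h : ∀ i < n, psi Δ c i = psi Δ d i) : ∀ i < n, c i = d i := by
  intro i
  induction i using Nat.strong_induction_on with
  | _ i ih =>
    intro hi
    have hm := h i hi
    rw [psi_eq_add hΔ0, psi_eq_add hΔ0, Finset.sum_congr rfl fun j hj => by
      rw [ih j (Finset.mem_range.1 hj) ((Finset.mem_range.1 hj).trans hi)]] at hm
    exact add_left_cancel hm

/-- Recursive solution of the triangular system `psi Δ c = b`. -/
def psiInv {A : Type*} [CommRing A] (Δ : A → ℕ → A) (b : ℕ → A) (i : ℕ) : A :=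
  b i - ∑ j : Fin i, Δ (psiInv Δ b j) (i - j)
termination_by i
decreasing_by exact j.2

theorem psi_psiInv {A : Type*} [CommRing A] {Δ : A → ℕ → A} (hΔ0 : ∀ x : A, Δ x 0 = x)
    (b : ℕ → A) (i : ℕ) : psi Δ (psiInv Δ b) i = b i := by
  rw [psi_eq_add hΔ0, psiInv, Fin.sum_univ_eq_sum_range fun j => Δ (psiInv Δ b j) (i - j)]
  ring

/-- The sum over all of `Fin n` cut off at `j ≤ i` is `psi`. -/
theorem sum_ite_eq_psi {A : Type*} [CommRing A] (Δ : A → ℕ → A) (c : ℕ → A) {n : ℕ} (i : Fin n) :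
    (∑ j : Fin n, if (j : ℕ) ≤ (i : ℕ) then Δ (c j) ((i : ℕ) - (j : ℕ)) else 0) = psi Δ c i := by
  rw [Fin.sum_univ_eq_sum_range fun j => if j ≤ (i : ℕ) then Δ (c j) ((i : ℕ) - j) else 0,
    ← Finset.sum_filter, psi]
  refine Finset.sum_congr ?_ fun _ _ => rfl
  ext j
  have := i.2
  simp only [Finset.mem_filter, Finset.mem_range]
  omega

/-- Let `p` be a prime, `A` a commutative ring on which `p` is a
nonzerodivisor, `φ` a lift of Frobenius on `A`, `s_φ : A → W(A)` the unique ring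
homomorphism with `gh_n (s_φ a) = φ^n a`, and `Δ : A → ℕ → A` the (unique) family with
`Δ a 0 = a` and `a^{p^m} = ∑_{s=0}^m p^s φ^{m-s}(Δ a s)`.  Regard `W_n(A)` as an
`A`-module via `s_φ`.  Then for `n ≥ 1` the map `Ψ_n : W_n(A) → A^n`,
`Ψ_n(a₀,…,a_{n-1})_i = ∑_{j ≤ i} Δ_{i-j}(a_j)`, is an additive bijection which is
semilinear: `Ψ_n(s_φ(a)·x)_i = φ^i(a) · Ψ_n(x)_i`; i.e. `Ψ_n` is an `A`-module
isomorphism `W_n(A) ≅ A ⊕ φ_*A ⊕ ⋯ ⊕ φ^{n-1}_*A`. -/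
theorem truncatedWittVector_decomposition (p : ℕ) [Fact p.Prime] (A : Type*) [CommRing A]
    (hA : (p : A) ∈ nonZeroDivisors A)
    (φ : A →+* A) (hφ : ∀ a : A, (p : A) ∣ (φ a - a ^ p))
    (s : A →+* WittVector p A)
    (hs : ∀ (k : ℕ) (a : A), WittVector.ghostComponent k (s a) = φ^[k] a)
    (Δ : A → ℕ → A) (hΔ0 : ∀ x : A, Δ x 0 = x)
    (hΔ : ∀ (x : A) (m : ℕ), x ^ p ^ m
        = ∑ t ∈ Finset.range (m + 1), (p : A) ^ t * φ^[m - t] (Δ x t))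
    (n : ℕ) (hn : 1 ≤ n) :
    ∃ Ψ : TruncatedWittVector p n A → (Fin n → A),
      (∀ (x : TruncatedWittVector p n A) (i : Fin n),
        Ψ x i = ∑ j : Fin n, if (j : ℕ) ≤ (i : ℕ) then Δ (x.coeff j) ((i : ℕ) - (j : ℕ)) else 0) ∧
      Function.Bijective Ψ ∧
      (∀ x y : TruncatedWittVector p n A, Ψ (x + y) = Ψ x + Ψ y) ∧
      (∀ (a : A) (x : TruncatedWittVector p n A) (i : Fin n),
        Ψ (WittVector.truncate n (s a) * x) i = φ^[(i : ℕ)] a * Ψ x i) := by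
  have key : ∀ x : WittVector p A,
      (fun m => WittVector.ghostComponent m x) = twistedGhost p φ (psi Δ x.coeff) :=
    fun x => funext (ghostComponent_eq_twistedGhost φ Δ hΔ x)
  have hadd : ∀ x y : WittVector p A,
      psi Δ (x + y).coeff = psi Δ x.coeff + psi Δ y.coeff := by
    intro x y
    apply twistedGhost_injective hA φ
    rw [twistedGhost_add, ← key, ← key, ← key]
    funext m
    exact map_add _ _ _
  have hmul : ∀ (a : A) (x : WittVector p A),
      psi Δ (s a * x).coeff = fun i => φ^[i] a * psi Δ x.coeff i := by
    intro a x
    apply twistedGhost_injective hA φ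
    funext m
    rw [twistedGhost_semilinear, ← congrFun (key x) m, ← congrFun (key (s a * x)) m, map_mul, hs]
  let Ψ : TruncatedWittVector p n A → (Fin n → A) := fun x i =>
    ∑ j : Fin n, if (j : ℕ) ≤ (i : ℕ) then Δ (x.coeff j) ((i : ℕ) - (j : ℕ)) else 0
  have hΨ : ∀ (x : WittVector p A) (i : Fin n),
      Ψ (WittVector.truncate n x) i = psi Δ x.coeff i := by
    intro x i
    rw [← sum_ite_eq_psi]
    simp only [Ψ, WittVector.coeff_truncate]
  have hsurj := WittVector.truncate_surjective p n A
  refine ⟨Ψ, fun _ _ => rfl, ⟨?_, ?_⟩, ?_, ?_⟩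
  · intro x y h
    obtain ⟨x, rfl⟩ := hsurj x
    obtain ⟨y, rfl⟩ := hsurj y
    ext i
    rw [WittVector.coeff_truncate, WittVector.coeff_truncate]
    refine psi_inj hΔ0 (n := n) (fun i hi => ?_) i i.2
    rw [← hΨ x ⟨i, hi⟩, ← hΨ y ⟨i, hi⟩, h]
  · intro b
    -- `b` is extended by zero to a sequence on `ℕ`
    refine ⟨WittVector.truncate n
      (WittVector.mk p (psiInv Δ fun i => if h : i < n then b ⟨i, h⟩ else 0)), ?_⟩
    funext i
    rw [hΨ, WittVector.coeff_mk, psi_psiInv hΔ0, dif_pos i.2]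
  · intro x y
    obtain ⟨x, rfl⟩ := hsurj x
    obtain ⟨y, rfl⟩ := hsurj y
    funext i
    rw [← map_add, Pi.add_apply, hΨ, hΨ, hΨ, hadd, Pi.add_apply]
  · intro a x i
    obtain ⟨x, rfl⟩ := hsurj x
    rw [← map_mul, hΨ, hΨ, hmul]
end

section
/- Let p be a prime, A a commutative ring on which p is a nonzerodivisor, and φ : A → A a lift of Frobenius. Then for every a ∈ A and every integer n ≥ 1, the images in W_n(A) of s_φ(φ(a)) and of the Teichmüller element [a^p] are congruent modulo pW_n(A). -/
/-!
Since `p` is a nonzerodivisor, Witt vectors over `A` are determined by their ghost components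
(`WittVector.ext_of_ghostComponent`). Comparing ghost components gives `s (φ a) = F (s a)` and
`[a ^ p] = F [a]`, with `F` the Witt vector Frobenius. The Witt vectors `s a` and `[a]` have the
same zeroth coefficient `a`, so `s a - [a] = V z` for some `z`, whence
`s (φ a) - [a ^ p] = F (V z) = p z` already in `W(A)`; truncation preserves this divisibility.
-/

/-- The ghost map is injective when `p` is a nonzerodivisor: `W(A)` embeds in `W(K)` for `K` the
total ring of fractions of `A`, where `p` is invertible. -/
theorem WittVector.ext_of_ghostComponent {p : ℕ} [Fact p.Prime] {A : Type*} [CommRing A]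
    (hA : (p : A) ∈ nonZeroDivisors A) {x y : WittVector p A}
    (h : ∀ k, WittVector.ghostComponent k x = WittVector.ghostComponent k y) : x = y := by
  let f := algebraMap A (FractionRing A)
  have hu : IsUnit (p : FractionRing A) := by
    simpa using IsLocalization.map_units (FractionRing A) (⟨(p : A), hA⟩ : nonZeroDivisors A)
  letI : Invertible (p : FractionRing A) := hu.invertible
  have map_ghost (z : WittVector p A) (k : ℕ) :
      WittVector.ghostComponent k (WittVector.map f z) = f (WittVector.ghostComponent k z) := by
    simp [WittVector.ghostComponent_apply, aeval_wittPolynomial, WittVector.map_coeff]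
  apply WittVector.map_injective f (IsFractionRing.injective A (FractionRing A))
  apply (WittVector.ghostMap.bijective_of_invertible p (FractionRing A)).1
  funext k
  rw [WittVector.ghostMap_apply, WittVector.ghostMap_apply, map_ghost, map_ghost, h]

/-- Let `p` be a prime, `A` a commutative ring on which `p` is a
nonzerodivisor, `φ` a lift of Frobenius on `A`, and `s_φ : A → W(A)` the unique ring
homomorphism with `gh_k (s_φ a) = φ^k a`.  Then for every `a : A` and `n ≥ 1`, the
images of `s_φ(φ a)` and of the Teichmüller element `[a^p]` in `W_n(A)` are congruent
modulo `p W_n(A)`. -/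
theorem section_comp_phi_eq_teichmuller_mod_p (p : ℕ) [Fact p.Prime] (A : Type*) [CommRing A]
    (hA : (p : A) ∈ nonZeroDivisors A)
    (φ : A →+* A) (hφ : ∀ a : A, (p : A) ∣ (φ a - a ^ p))
    (s : A →+* WittVector p A)
    (hs : ∀ (k : ℕ) (a : A), WittVector.ghostComponent k (s a) = φ^[k] a)
    (a : A) (n : ℕ) (hn : 1 ≤ n) :
    (p : TruncatedWittVector p n A) ∣
      (WittVector.truncate n (s (φ a))
        - WittVector.truncate n (WittVector.teichmuller p (a ^ p))) := by
  have h_section : s (φ a) = WittVector.frobenius (s a) :=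
    WittVector.ext_of_ghostComponent hA fun k => by
      rw [WittVector.ghostComponent_frobenius, hs, hs, Function.iterate_succ_apply]
  have h_teich : WittVector.teichmuller p (a ^ p) =
      WittVector.frobenius (WittVector.teichmuller p a) :=
    WittVector.ext_of_ghostComponent hA fun k => by
      rw [WittVector.ghostComponent_frobenius, WittVector.ghostComponent_teichmuller,
        WittVector.ghostComponent_teichmuller, ← pow_mul, pow_succ']
  have h_coeff : (s a - WittVector.teichmuller p a).coeff 0 = 0 := by
    -- The zeroth ghost component is the zeroth coefficient.
    have ghost_zero (x : WittVector p A) : WittVector.ghostComponent 0 x = x.coeff 0 := by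
      simp [WittVector.ghostComponent_apply, aeval_wittPolynomial]
    rw [← ghost_zero, map_sub, hs, WittVector.ghostComponent_teichmuller]
    simp
  have h_versch : s a - WittVector.teichmuller p a =
      WittVector.verschiebung ((s a - WittVector.teichmuller p a).shift 1) :=
    WittVector.eq_iterate_verschiebung (n := 1) fun i hi => by
      rw [Nat.lt_one_iff.mp hi, h_coeff]
  have h_dvd : (p : WittVector p A) ∣ s (φ a) - WittVector.teichmuller p (a ^ p) := by
    rw [h_section, h_teich, ← map_sub, h_versch, WittVector.frobenius_verschiebung]
    exact dvd_mul_left _ _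
  simpa using map_dvd (WittVector.truncate n) h_dvd
end

section
/- Let p be a prime, R a commutative ℤ_(p)-algebra, and n ≥ 1 an integer. Then the map Φ_{R,n} : R/pR → W_n(R)/pW_n(R) sending the class of a ∈ R to the class of the Teichmüller element [a^p] is well defined (i.e. if a ≡ b mod pR then [a^p] ≡ [b^p] mod pW_n(R)) and is a ring homomorphism; in particular [(a+b)^p] ≡ [a^p] + [b^p] (mod pW_n(R)) for all a, b ∈ R. -/
/-!
The Witt vector Frobenius `F` is a ring endomorphism of `W(R)` with `F [a] = [a ^ p]` and
`F ∘ V = p`. Any `x` with vanishing zeroth coefficient has the form `V y`, so `F x = p y`: thus `F`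
sends the kernel of the zeroth coefficient map `W(R) → R` into `p W(R)`.

Applied to `[a + b] - [a] - [b]` this gives additivity of `a ↦ [a ^ p]` modulo `p`; applied to
`[a] - [b] - p [c]`, where `a - b = p c`, it gives well-definedness on `R/pR`. Multiplicativity is
that of the Teichmüller map. Everything takes place in `W(R)` and is then truncated to `W_n(R)`,
which avoids a Frobenius on truncated Witt vectors.
-/

namespace PhiRingHom

open WittVector

/-- `F [a] = [a ^ p]` over any commutative ring. By naturality it suffices to treat polynomial rings
over `ℤ`, hence over `ℚ`, where the ghost map is injective. -/
theorem frobenius_teichmuller (p : ℕ) [Fact p.Prime] {R : Type*} [CommRing R] (a : R) :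
    frobenius (teichmuller p a) = teichmuller p (a ^ p) := by
  have rat : ∀ x : MvPolynomial R ℚ,
      frobenius (teichmuller p x) = teichmuller p (x ^ p) := by
    intro x
    apply (ghostMap.bijective_of_invertible p (MvPolynomial R ℚ)).1
    ext1 n
    simp only [ghostMap_apply, ghostComponent_frobenius, ghostComponent_teichmuller]
    rw [← pow_mul, ← pow_succ']
  have int : ∀ x : MvPolynomial R ℤ,
      frobenius (teichmuller p x) = teichmuller p (x ^ p) := by
    intro x
    refine map_injective (MvPolynomial.map (Int.castRingHom ℚ))
      (MvPolynomial.map_injective _ Int.cast_injective) ?_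
    rw [(frobenius_isPoly p).map, map_teichmuller, map_teichmuller, rat, map_pow (MvPolynomial.map _)]
  obtain ⟨x, rfl⟩ := MvPolynomial.counit_surjective R a
  rw [← map_pow (MvPolynomial.counit R), ← map_teichmuller, ← map_teichmuller, ← int,
    (frobenius_isPoly p).map]

theorem dvd_frobenius {p : ℕ} [Fact p.Prime] {R : Type*} [CommRing R] {x : WittVector p R}
    (hx : constantCoeff x = 0) : (p : WittVector p R) ∣ frobenius x := by
  have hV : x = verschiebung (x.shift 1) := by
    refine eq_iterate_verschiebung (n := 1) fun i hi => ?_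
    obtain rfl : i = 0 := by omega
    exact hx
  rw [hV, frobenius_verschiebung]
  exact dvd_mul_left _ _

theorem constantCoeff_teichmuller (p : ℕ) [Fact p.Prime] {R : Type*} [CommRing R] (a : R) :
    constantCoeff (teichmuller p a) = a := rfl

theorem dvd_teichmuller_sub (p : ℕ) [Fact p.Prime] {R : Type*} [CommRing R] {a b : R}
    (h : (p : R) ∣ a - b) :
    (p : WittVector p R) ∣ teichmuller p (a ^ p) - teichmuller p (b ^ p) := by
  obtain ⟨c, hc⟩ := h
  have key : (p : WittVector p R) ∣
      frobenius (teichmuller p a - teichmuller p b - p * teichmuller p c) := by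
    apply dvd_frobenius
    simp only [map_sub, map_mul, map_natCast, constantCoeff_teichmuller, hc, sub_self]
  simp only [map_sub, map_mul, map_natCast, frobenius_teichmuller] at key
  exact (dvd_sub_left (dvd_mul_right _ _)).1 key

theorem dvd_teichmuller_add (p : ℕ) [Fact p.Prime] {R : Type*} [CommRing R] (a b : R) :
    (p : WittVector p R) ∣
      teichmuller p ((a + b) ^ p) - teichmuller p (a ^ p) - teichmuller p (b ^ p) := by
  have key : (p : WittVector p R) ∣
      frobenius (teichmuller p (a + b) - teichmuller p a - teichmuller p b) := by
    apply dvd_frobenius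
    simp only [map_sub, constantCoeff_teichmuller]
    ring
  simpa only [map_sub, frobenius_teichmuller] using key

end PhiRingHom

/-- Let `p` be a prime, `R` a commutative `ℤ_(p)`-algebra (i.e. every
integer prime to `p` is invertible in `R`), and `n ≥ 1`.  Then the map
`Φ_{R,n} : R/pR → W_n(R)/pW_n(R)`, sending the class of `a` to the class of the
Teichmüller element `[a^p]`, is well defined and a ring homomorphism; in particular
`[(a+b)^p] ≡ [a^p] + [b^p] (mod p W_n(R))` for all `a b : R`. -/
theorem phi_well_defined_ring_hom (p : ℕ) [Fact p.Prime] (R : Type*) [CommRing R]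
    (hZp : ∀ m : ℤ, ¬ (p : ℤ) ∣ m → IsUnit (m : R)) (n : ℕ) (hn : 1 ≤ n) :
    (∀ a b : R, (p : R) ∣ (a - b) →
      (p : TruncatedWittVector p n R) ∣
        (WittVector.truncate n (WittVector.teichmuller p (a ^ p))
          - WittVector.truncate n (WittVector.teichmuller p (b ^ p)))) ∧
    (∀ a b : R,
      (p : TruncatedWittVector p n R) ∣
        (WittVector.truncate n (WittVector.teichmuller p ((a + b) ^ p))
          - WittVector.truncate n (WittVector.teichmuller p (a ^ p))
          - WittVector.truncate n (WittVector.teichmuller p (b ^ p)))) ∧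
    (∃ Φ : R ⧸ Ideal.span {(p : R)} →+*
        (TruncatedWittVector p n R) ⧸ Ideal.span {(p : TruncatedWittVector p n R)},
      ∀ a : R, Φ (Ideal.Quotient.mk _ a)
        = Ideal.Quotient.mk _ (WittVector.truncate n (WittVector.teichmuller p (a ^ p)))) := by
  have h₁ : ∀ a b : R, (p : R) ∣ (a - b) →
      (p : TruncatedWittVector p n R) ∣
        (WittVector.truncate n (WittVector.teichmuller p (a ^ p))
          - WittVector.truncate n (WittVector.teichmuller p (b ^ p))) := by
    intro a b h
    simpa only [map_natCast, map_sub] using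
      map_dvd (WittVector.truncate n) (PhiRingHom.dvd_teichmuller_sub p h)
  have h₂ : ∀ a b : R,
      (p : TruncatedWittVector p n R) ∣
        (WittVector.truncate n (WittVector.teichmuller p ((a + b) ^ p))
          - WittVector.truncate n (WittVector.teichmuller p (a ^ p))
          - WittVector.truncate n (WittVector.teichmuller p (b ^ p))) := by
    intro a b
    simpa only [map_natCast, map_sub] using
      map_dvd (WittVector.truncate n) (PhiRingHom.dvd_teichmuller_add p a b)
  refine ⟨h₁, h₂, ?_⟩
  let φ : R →+* TruncatedWittVector p n R ⧸ Ideal.span {(p : TruncatedWittVector p n R)} :=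
    { toFun := fun a =>
        Ideal.Quotient.mk _ (WittVector.truncate n (WittVector.teichmuller p (a ^ p)))
      map_one' := by simp only [one_pow, map_one]
      map_mul' := fun a b => by simp only [mul_pow, map_mul]
      map_zero' := by
        rw [zero_pow (Fact.out : p.Prime).ne_zero, WittVector.teichmuller_zero, map_zero, map_zero]
      map_add' := fun a b => by
        rw [← map_add, Ideal.Quotient.mk_eq_mk_iff_sub_mem, Ideal.mem_span_singleton, ← sub_sub]
        exact h₂ a b }
  refine ⟨Ideal.Quotient.lift _ φ fun a ha => ?_, fun a => Ideal.Quotient.lift_mk _ _ _⟩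
  rw [Ideal.mem_span_singleton] at ha
  rw [← map_zero φ]
  refine Ideal.Quotient.mk_eq_mk_iff_sub_mem _ _ |>.2 (Ideal.mem_span_singleton.2 (h₁ a 0 ?_))
  rwa [sub_zero]
end

section
/- Let p be a prime and R a commutative ring on which p is a nonzerodivisor. Then p is a nonzerodivisor on the ring W(R) of p-typical Witt vectors, and p is a nonzerodivisor on W_n(R) for every integer n ≥ 1. -/
/-!
The ghost components `w_i(x) = ∑_{j ≤ i} p^j x_j^{p^(i-j)}` are ring homomorphisms `W(R) → R`, and
`w_i` depends only on the first `i + 1` coefficients. If the first `n` coefficients of `x * p`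
vanish, then `w_i(x) * p = w_i(x * p) = 0`, so `w_i(x) = 0`, for all `i < n`. As `p` is a
nonzerodivisor on `R`, solving the triangular system `w_i(x) = 0` gives `x_i = 0` for all `i < n`
(`coeff_eq_zero_of_mul_p`). This is the claim for `W_n(R)`, and letting `n` vary, for `W(R)`.
-/

theorem ghostComponent_eq_sum {p : ℕ} [Fact p.Prime] {R : Type*} [CommRing R]
    (x : WittVector p R) (i : ℕ) :
    WittVector.ghostComponent i x =
      ∑ j ∈ Finset.range (i + 1), (p : R) ^ j * x.coeff j ^ p ^ (i - j) := by
  rw [WittVector.ghostComponent_apply, aeval_wittPolynomial]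

theorem ghostComponent_eq_zero {p : ℕ} [Fact p.Prime] {R : Type*} [CommRing R]
    (x : WittVector p R) (i : ℕ) (h : ∀ j ≤ i, x.coeff j = 0) :
    WittVector.ghostComponent i x = 0 := by
  rw [ghostComponent_eq_sum]
  refine Finset.sum_eq_zero fun j hj => ?_
  have hp : p ≠ 0 := (Fact.out : p.Prime).ne_zero
  rw [h j (Nat.lt_succ_iff.mp (Finset.mem_range.mp hj)), zero_pow (pow_ne_zero _ hp), mul_zero]

theorem coeff_eq_zero_of_mul_p {p : ℕ} [Fact p.Prime] {R : Type*} [CommRing R]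
    (hR : (p : R) ∈ nonZeroDivisors R) (x : WittVector p R) (n : ℕ)
    (h : ∀ i < n, (x * (p : WittVector p R)).coeff i = 0) : ∀ i < n, x.coeff i = 0 := by
  intro i
  induction i using Nat.strong_induction_on with
  | _ i ih =>
    intro hi
    have hg : WittVector.ghostComponent i x = 0 := by
      have h0 := ghostComponent_eq_zero _ i fun j hj => h j (lt_of_le_of_lt hj hi)
      rw [map_mul, map_natCast] at h0
      exact (mul_right_mem_nonZeroDivisors_eq_zero_iff hR).mp h0
    have hp : p ≠ 0 := (Fact.out : p.Prime).ne_zero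
    -- By induction only the top term `p^i x_i` of the ghost component survives.
    rw [ghostComponent_eq_sum, Finset.sum_range_succ, Finset.sum_eq_zero, zero_add, Nat.sub_self,
      pow_zero, pow_one] at hg
    · exact (mul_left_mem_nonZeroDivisors_eq_zero_iff (pow_mem hR i)).mp hg
    · intro j hj
      have hj' := Finset.mem_range.mp hj
      rw [ih j hj' (hj'.trans hi), zero_pow (pow_ne_zero _ hp), mul_zero]

/-- Let `p` be a prime and `R` a commutative ring on which `p` is a
nonzerodivisor.  Then `p` is a nonzerodivisor on `W(R)` and on `W_n(R)` for every
`n ≥ 1`. -/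
theorem p_nonZeroDivisor_wittVector (p : ℕ) [Fact p.Prime] (R : Type*) [CommRing R]
    (hR : (p : R) ∈ nonZeroDivisors R) :
    ((p : WittVector p R) ∈ nonZeroDivisors (WittVector p R)) ∧
    (∀ n : ℕ, 1 ≤ n →
      (p : TruncatedWittVector p n R) ∈ nonZeroDivisors (TruncatedWittVector p n R)) := by
  constructor
  · rw [mem_nonZeroDivisors_iff_right]
    intro x hx
    ext i
    rw [WittVector.zero_coeff]
    refine coeff_eq_zero_of_mul_p hR x (i + 1) (fun j _ => ?_) i (Nat.lt_succ_self i)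
    rw [hx, WittVector.zero_coeff]
  · intro n _
    rw [mem_nonZeroDivisors_iff_right]
    intro y hy
    obtain ⟨x, rfl⟩ := WittVector.truncate_surjective p n R y
    rw [← map_natCast (WittVector.truncate (p := p) (R := R) n), ← map_mul] at hy
    have hx := coeff_eq_zero_of_mul_p hR x n ((WittVector.mem_ker_truncate n _).mp hy)
    exact (WittVector.mem_ker_truncate n x).mpr hx
end

section
/- Let p be a prime and R a commutative ℤ_(p)-algebra on which p is a nonzerodivisor. For all integers n, m ≥ 1, the sequence of abelian groups 0 → W_n(R)/pW_n(R) → W_{n+m}(R)/pW_{n+m}(R) → W_m(R)/pW_m(R) → 0, where the first map is induced by the m-fold Verschiebung V^m and the second by the restriction (truncation to the first m coordinates), is exact. Moreover V^m is semilinear for the module structures via Φ: for every b ∈ R and α ∈ W_n(R), [b^p] · V^m(α) = V^m([b^{p^{m+1}}] · α) in W_{n+m}(R); hence the sequence 0 → F^m_*Q_{R,n} → Q_{R,n+m} → Q_{R,m} → 0 is an exact sequence of R/pR-modules. -/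
/-!
Everything is checked on lifts to the untruncated ring `W(R)`, where `V^m` shifts coordinates:
`V^m x` and `V^m y` agree in `W_{n+m}(R)` exactly when `x` and `y` agree in `W_n(R)`, and the
kernel of `W(R) → W_m(R)` is the image of `V^m`. So `V^m` descends to an injection
`v : W_n(R) → W_{n+m}(R)` whose image is the kernel of the restriction to `W_m(R)`.

The one place where the hypothesis on `p` is essential is that `W_m(R)` has no `p`-torsion: the
ghost components detect zero when `p` is a nonzerodivisor (`coeff_eq_zero_of_ghostComponent`).
Hence if `v α = p γ`, the restriction of `γ` to `W_m(R)` is killed by `p`, so it is zero,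
`γ = v δ`, and `v α = v (p δ)` gives `α = p δ`. Exactness in the middle follows by lifting a
quotient by `p` from `W_m(R)` to `W_{n+m}(R)`.

Semilinearity is the projection formula `V^m x * y = V^m (x * F^m y)` together with
`F^m [a] = [a^{p^m}]`, which is again read off from ghost components.
-/

namespace WittVector

variable {p : ℕ} [Fact p.Prime] {R : Type*} [CommRing R]

theorem coeff_eq_zero_of_ghostComponent (hR : (p : R) ∈ nonZeroDivisors R) {m : ℕ}
    {x : WittVector p R} (h : ∀ i < m, ghostComponent i x = 0) : ∀ i < m, x.coeff i = 0 := by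
  intro i
  induction i using Nat.strong_induction_on with
  | _ i ih =>
    intro hi
    have h0 := h i hi
    rw [ghostComponent_apply, aeval_wittPolynomial, Finset.sum_range_succ,
      Finset.sum_eq_zero] at h0
    · simp only [zero_add, Nat.sub_self, pow_zero, pow_one] at h0
      exact (mul_left_mem_nonZeroDivisors_eq_zero_iff (pow_mem hR i)).1 h0
    · intro k hk
      have hk' := Finset.mem_range.1 hk
      rw [ih k hk' (hk'.trans hi), zero_pow (pow_ne_zero _ (Fact.out : p.Prime).ne_zero), mul_zero]

/-- `W_m(R)` has no `p`-torsion, stated on lifts to `W(R)`. -/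
theorem truncate_eq_zero_of_natCast_mul (hR : (p : R) ∈ nonZeroDivisors R) {m : ℕ}
    {x : WittVector p R} (h : truncate m ((p : WittVector p R) * x) = 0) :
    truncate m x = 0 := by
  have h' := (mem_ker_truncate m _).1 (RingHom.mem_ker.2 h)
  refine RingHom.mem_ker.1 ((mem_ker_truncate m _).2 (coeff_eq_zero_of_ghostComponent hR ?_))
  intro i hi
  have h0 : ghostComponent i ((p : WittVector p R) * x) = 0 := by
    rw [ghostComponent_apply, aeval_wittPolynomial]
    refine Finset.sum_eq_zero fun k hk => ?_
    rw [h' k ((Nat.lt_succ_iff.1 (Finset.mem_range.1 hk)).trans_lt hi),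
      zero_pow (pow_ne_zero _ (Fact.out : p.Prime).ne_zero), mul_zero]
  rw [map_mul, map_natCast] at h0
  exact (mul_left_mem_nonZeroDivisors_eq_zero_iff hR).1 h0

theorem frobenius_teichmuller (hR : (p : R) ∈ nonZeroDivisors R) (a : R) :
    frobenius (teichmuller p a) = teichmuller p (a ^ p) := by
  rw [← sub_eq_zero]
  ext i
  rw [zero_coeff]
  refine coeff_eq_zero_of_ghostComponent hR (m := i + 1) (fun k _ => ?_) i i.lt_succ_self
  rw [map_sub, ghostComponent_frobenius, ghostComponent_teichmuller, ghostComponent_teichmuller,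
    ← pow_mul, pow_succ', sub_self]

theorem iterate_frobenius_teichmuller (hR : (p : R) ∈ nonZeroDivisors R) (a : R) (m : ℕ) :
    (⇑(frobenius (p := p) (R := R)))^[m] (teichmuller p a) = teichmuller p (a ^ p ^ m) := by
  induction m with
  | zero => simp
  | succ m ih =>
    rw [Function.iterate_succ_apply', ih, frobenius_teichmuller hR, ← pow_mul, ← pow_succ]

theorem truncate_eq_truncate_iff {n : ℕ} {x y : WittVector p R} :
    truncate n x = truncate n y ↔ ∀ i < n, x.coeff i = y.coeff i := by
  rw [TruncatedWittVector.ext_iff]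
  simp only [coeff_truncate]
  exact Fin.forall_iff

/-- Well-definedness and injectivity of `V^m : W_n(R) → W_{n+m}(R)`. -/
theorem truncate_iterate_verschiebung_iff {n m : ℕ} {x y : WittVector p R} :
    truncate (n + m) ((⇑(verschiebung (p := p) (R := R)))^[m] x) =
      truncate (n + m) ((⇑(verschiebung (p := p) (R := R)))^[m] y) ↔
    truncate n x = truncate n y := by
  rw [truncate_eq_truncate_iff, truncate_eq_truncate_iff]
  constructor
  · intro h i hi
    simpa only [iterate_verschiebung_coeff] using h (i + m) (by omega)
  · intro h i hi
    rcases lt_or_ge i m with him | him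
    · rw [iterate_verschiebung_coeff_eq_zero _ him, iterate_verschiebung_coeff_eq_zero _ him]
    · obtain ⟨k, rfl⟩ := Nat.exists_eq_add_of_le' him
      rw [iterate_verschiebung_coeff, iterate_verschiebung_coeff]
      exact h k (by omega)

theorem exists_iterate_verschiebung_of_truncate_eq_zero {m : ℕ} {x : WittVector p R}
    (h : truncate m x = 0) : ∃ y, x = (⇑(verschiebung (p := p) (R := R)))^[m] y :=
  ⟨_, eq_iterate_verschiebung ((mem_ker_truncate m x).1 (RingHom.mem_ker.2 h))⟩

theorem iterate_verschiebung_natCast_mul (m k : ℕ) (x : WittVector p R) :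
    (⇑(verschiebung (p := p) (R := R)))^[m] (k * x) =
      k * (⇑(verschiebung (p := p) (R := R)))^[m] x := by
  rw [← nsmul_eq_mul, ← nsmul_eq_mul, iterate_map_nsmul]

/-- The additive map `W_n(R) → W_{n+m}(R)` induced by the `m`-fold Verschiebung, computed on
the lift `TruncatedWittVector.out` of a truncated Witt vector by zeros. -/
noncomputable def truncatedVerschiebung (p : ℕ) [Fact p.Prime] (R : Type*) [CommRing R]
    (n m : ℕ) : TruncatedWittVector p n R →+ TruncatedWittVector p (n + m) R :=
  AddMonoidHom.mk'
    (fun a => truncate (n + m) ((⇑(verschiebung (p := p) (R := R)))^[m] a.out)) (by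
      intro a b
      rw [← map_add, ← iterate_map_add, truncate_iterate_verschiebung_iff, map_add]
      exact (TruncatedWittVector.truncateFun_out _).trans (congrArg₂ (· + ·)
        (TruncatedWittVector.truncateFun_out a).symm (TruncatedWittVector.truncateFun_out b).symm))

theorem truncatedVerschiebung_truncate (n m : ℕ) (x : WittVector p R) :
    truncatedVerschiebung p R n m (truncate n x) =
      truncate (n + m) ((⇑(verschiebung (p := p) (R := R)))^[m] x) :=
  truncate_iterate_verschiebung_iff.2 (TruncatedWittVector.truncateFun_out (truncate n x))

end WittVector


/-- Let `p` be a prime and `R` a commutative `ℤ_(p)`-algebra on which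
`p` is a nonzerodivisor.  For `n, m ≥ 1`, let `v : W_n(R) → W_{n+m}(R)` be the additive
map induced by the `m`-fold Verschiebung `V^m`.  Then the sequence of abelian groups
`0 → W_n(R)/p → W_{n+m}(R)/p → W_m(R)/p → 0` (first map induced by `v`, second by the
restriction/truncation) is exact, and `v` satisfies the semilinearity
`[b^p] · v(α) = v([b^{p^{m+1}}] · α)`; hence `0 → F^m_* Q_{R,n} → Q_{R,n+m} → Q_{R,m} → 0`
is an exact sequence of `R/pR`-modules. -/
theorem verschiebung_truncated_exact_mod_p (p : ℕ) [Fact p.Prime] (R : Type*) [CommRing R]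
    (hZp : ∀ k : ℤ, ¬ (p : ℤ) ∣ k → IsUnit (k : R))
    (hR : (p : R) ∈ nonZeroDivisors R)
    (n m : ℕ) (hn : 1 ≤ n) (hm : 1 ≤ m) :
    ∃ v : TruncatedWittVector p n R →+ TruncatedWittVector p (n + m) R,
      -- `v` is induced by the `m`-fold Verschiebung on Witt vectors
      (∀ x : WittVector p R,
        v (WittVector.truncate n x)
          = WittVector.truncate (n + m) ((⇑(WittVector.verschiebung (p := p) (R := R)))^[m] x)) ∧
      -- injectivity of the induced map `W_n(R)/p → W_{n+m}(R)/p`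
      (∀ α : TruncatedWittVector p n R,
        (p : TruncatedWittVector p (n + m) R) ∣ v α → (p : TruncatedWittVector p n R) ∣ α) ∧
      -- exactness in the middle: the kernel of `W_{n+m}(R)/p → W_m(R)/p` is the image of `v`
      (∀ β : TruncatedWittVector p (n + m) R,
        ((p : TruncatedWittVector p m R) ∣ TruncatedWittVector.truncate (Nat.le_add_left m n) β
          ↔ ∃ (α : TruncatedWittVector p n R) (γ : TruncatedWittVector p (n + m) R),
              β = v α + p * γ)) ∧
      -- surjectivity of the restriction `W_{n+m}(R)/p → W_m(R)/p`
      (Function.Surjective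
        (TruncatedWittVector.truncate (Nat.le_add_left m n) :
          TruncatedWittVector p (n + m) R →+* TruncatedWittVector p m R)) ∧
      -- semilinearity: `[b^p] ⬝ v α = v ([b^{p^{m+1}}] ⬝ α)`
      (∀ (b : R) (α : TruncatedWittVector p n R),
        WittVector.truncate (n + m) (WittVector.teichmuller p (b ^ p)) * v α
          = v (WittVector.truncate n (WittVector.teichmuller p (b ^ p ^ (m + 1))) * α)) := by
  refine ⟨WittVector.truncatedVerschiebung p R n m,
    WittVector.truncatedVerschiebung_truncate n m, ?_, ?_,
    TruncatedWittVector.truncate_surjective _, ?_⟩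
  · rintro α ⟨γ, h⟩
    obtain ⟨x, rfl⟩ := WittVector.truncate_surjective p n R α
    obtain ⟨y, rfl⟩ := WittVector.truncate_surjective p (n + m) R γ
    rw [WittVector.truncatedVerschiebung_truncate, ← map_natCast (WittVector.truncate (n + m)),
      ← map_mul] at h
    have hy : WittVector.truncate m y = 0 := by
      refine WittVector.truncate_eq_zero_of_natCast_mul hR ?_
      rw [← TruncatedWittVector.truncate_wittVector_truncate (Nat.le_add_left m n), ← h,
        TruncatedWittVector.truncate_wittVector_truncate]
      exact RingHom.mem_ker.1 ((WittVector.mem_ker_truncate m _).2 fun i hi =>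
        WittVector.iterate_verschiebung_coeff_eq_zero x hi)
    obtain ⟨z, rfl⟩ := WittVector.exists_iterate_verschiebung_of_truncate_eq_zero hy
    rw [← WittVector.iterate_verschiebung_natCast_mul,
      WittVector.truncate_iterate_verschiebung_iff, map_mul, map_natCast] at h
    exact ⟨_, h⟩
  · intro β
    obtain ⟨y, rfl⟩ := WittVector.truncate_surjective p (n + m) R β
    rw [TruncatedWittVector.truncate_wittVector_truncate]
    constructor
    · rintro ⟨γ, h⟩
      obtain ⟨c, rfl⟩ := WittVector.truncate_surjective p m R γ
      have h0 : WittVector.truncate m (y - (p : WittVector p R) * c) = 0 := by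
        rw [map_sub, map_mul, map_natCast, h, sub_self]
      obtain ⟨z, hz⟩ := WittVector.exists_iterate_verschiebung_of_truncate_eq_zero h0
      refine ⟨WittVector.truncate n z, WittVector.truncate (n + m) c, ?_⟩
      rw [WittVector.truncatedVerschiebung_truncate, ← hz, map_sub, map_mul, map_natCast,
        sub_add_cancel]
    · rintro ⟨α, γ, h⟩
      obtain ⟨x, rfl⟩ := WittVector.truncate_surjective p n R α
      refine ⟨TruncatedWittVector.truncate (Nat.le_add_left m n) γ, ?_⟩
      rw [← TruncatedWittVector.truncate_wittVector_truncate (Nat.le_add_left m n), h,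
        WittVector.truncatedVerschiebung_truncate, map_add, map_mul, map_natCast,
        TruncatedWittVector.truncate_wittVector_truncate, add_eq_right]
      exact RingHom.mem_ker.1 ((WittVector.mem_ker_truncate m _).2 fun i hi =>
        WittVector.iterate_verschiebung_coeff_eq_zero x hi)
  · intro b α
    obtain ⟨x, rfl⟩ := WittVector.truncate_surjective p n R α
    rw [← map_mul, WittVector.truncatedVerschiebung_truncate,
      WittVector.truncatedVerschiebung_truncate, ← map_mul, mul_comm,
      WittVector.iterate_verschiebung_mul_left, WittVector.iterate_frobenius_teichmuller hR,
      ← pow_mul, ← pow_succ', mul_comm]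
end

section
/- Let p be a prime and R a Noetherian commutative ℤ_(p)-algebra on which p is a nonzerodivisor, and assume that R̄ := R/pR is F-finite. Then for every integer n ≥ 1, the R̄-module Q_{R,n} (that is, W_n(R)/pW_n(R) with R̄-module structure given by Φ_{R,n}) is a finitely generated R̄-module. -/
/-!
Filter `W_n(R)` by the ideals `Vⁱ W_{n-i}(R)`.  The class of `Vⁱ w` in the `i`-th graded
piece is determined by the constant coefficient of `w`, so this piece is a copy of the additive
group of `R`.  By the projection formula `[a] Vⁱ(w) = Vⁱ(Fⁱ[a] w)` and
`F [a] = [a ^ p]`, the element `a` acts through `Φ` on it as multiplication by `a ^ p ^ (i + 1)`.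
Moreover `p Vⁱ[y]` has leading coefficient `p y`, so after reduction modulo `p` the graded piece
becomes a quotient of `R̄`, viewed as an `R̄`-module through the `(i + 1)`-st power of Frobenius,
which is finite because `R̄` is `F`-finite.  Hence the elements `Vⁱ[s]`, with `s` running through
lifts of finitely many generators of `R̄` over that power of Frobenius and `i < n`, generate
`W_n(R)/p`.
-/

open WittVector

namespace QModuleFinite

/-- The Witt vector Frobenius raises the argument of a Teichmüller representative to the power `p`,
over any commutative ring.  By naturality it suffices to treat polynomial rings over `ℤ`, hence
over `ℚ`, where the ghost map is injective. -/
theorem frobenius_teichmuller (p : ℕ) [hp : Fact p.Prime] {R : Type*} [CommRing R] (r : R) :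
    frobenius (teichmuller p r) = teichmuller p (r ^ p) := by
  have map_frob : ∀ {A B : Type _} [CommRing A] [CommRing B] (f : A →+* B) (x : WittVector p A),
      WittVector.map f (frobenius x) = frobenius (WittVector.map f x) :=
    fun f x => (frobenius_isPoly p).map f x
  have hQ : ∀ x : MvPolynomial R ℚ,
      frobenius (teichmuller p x) = teichmuller p (x ^ p) := by
    intro x
    apply (ghostMap.bijective_of_invertible p (MvPolynomial R ℚ)).1
    ext1 n
    simp only [ghostMap_apply, ghostComponent_frobenius, ghostComponent_teichmuller]
    rw [← pow_mul, pow_succ']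
  have hZ : ∀ x : MvPolynomial R ℤ,
      frobenius (teichmuller p x) = teichmuller p (x ^ p) := by
    intro x
    refine map_injective (MvPolynomial.map (Int.castRingHom ℚ))
      (MvPolynomial.map_injective _ Int.cast_injective) ?_
    rw [map_frob, map_teichmuller, hQ, map_teichmuller, ← map_pow (MvPolynomial.map _)]
  rcases MvPolynomial.counit_surjective R r with ⟨x, rfl⟩
  rw [← map_teichmuller, ← map_frob, hZ, map_teichmuller, map_pow]

theorem iterate_frobenius_teichmuller (p : ℕ) [hp : Fact p.Prime] {R : Type*} [CommRing R]
    (r : R) (i : ℕ) : frobenius^[i] (teichmuller p r) = teichmuller p (r ^ p ^ i) := by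
  induction i with
  | zero => simp
  | succ i ih => rw [Function.iterate_succ_apply', ih, frobenius_teichmuller, ← pow_mul, pow_succ]

theorem exists_generators {A B : Type*} [CommRing A] [CommRing B] {G : A →+* B} (hG : G.Finite) :
    ∃ (m : ℕ) (s : Fin m → B), ∀ y : B, ∃ c : Fin m → A, y = ∑ j, G (c j) * s j := by
  let _ := G.toAlgebra
  have : Module.Finite A B := hG
  obtain ⟨m, s, hs⟩ := Module.Finite.exists_fin (R := A) (M := B)
  refine ⟨m, s, fun y => ?_⟩
  have hy : y ∈ Submodule.span A (Set.range s) := hs ▸ Submodule.mem_top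
  obtain ⟨c, hc⟩ := (Submodule.mem_span_range_iff_exists_fun A).1 hy
  exact ⟨c, by rw [← hc]; rfl⟩

/-- Finiteness of the `k`-th power of Frobenius on `R̄`, with generators, coefficients and the
equation lifted to `R`. -/
theorem exists_lifted_generators (p : ℕ) {R : Type*} [CommRing R]
    (F : R ⧸ Ideal.span {(p : R)} →+* R ⧸ Ideal.span {(p : R)})
    (hF : ∀ x : R ⧸ Ideal.span {(p : R)}, F x = x ^ p) (hFfin : F.Finite) (k : ℕ) :
    ∃ (m : ℕ) (s : Fin m → R), ∀ x : R, ∃ (c : Fin m → R) (y : R),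
      x = ∑ j, c j ^ p ^ k * s j + p * y := by
  have hpow : (F ^ k).Finite ∧ ∀ x, (F ^ k) x = x ^ p ^ k := by
    induction k with
    | zero => exact ⟨RingHom.Finite.id _, fun x => by simp⟩
    | succ k ih =>
      refine ⟨?_, fun x => ?_⟩
      · rw [pow_succ]; exact ih.1.comp hFfin
      · rw [pow_succ, RingHom.mul_def, RingHom.comp_apply, hF, ih.2, ← pow_mul, pow_succ']
  obtain ⟨m, s, hs⟩ := exists_generators hpow.1
  choose s' hs' using fun j => Ideal.Quotient.mk_surjective (s j)
  refine ⟨m, s', fun x => ?_⟩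
  obtain ⟨c, hc⟩ := hs (Ideal.Quotient.mk _ x)
  choose c' hc' using fun j => Ideal.Quotient.mk_surjective (c j)
  have hmem : x - ∑ j, c' j ^ p ^ k * s' j ∈ Ideal.span {(p : R)} := by
    rw [← Ideal.Quotient.eq, hc, map_sum]
    simp [hpow.2, hs', hc']
  obtain ⟨y, hy⟩ := Ideal.mem_span_singleton'.1 hmem
  exact ⟨c', y, by linear_combination -hy⟩

end QModuleFinite

open QModuleFinite in
/-- Let `p` be a prime and `R` a Noetherian commutative
`ℤ_(p)`-algebra on which `p` is a nonzerodivisor, such that `R̄ := R/pR` is `F`-finite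
(the Frobenius `x ↦ x^p` of `R̄` is a finite ring homomorphism).  Then for every
`n ≥ 1`, the `R̄`-module `Q_{R,n}` — that is, `W_n(R)/pW_n(R)` with `R̄`-module
structure given by the ring homomorphism `Φ_{R,n}` sending `a mod p` to
`[a^p] mod p` — is a finitely generated `R̄`-module; equivalently `Φ_{R,n}` is a
finite ring homomorphism. -/
theorem Q_module_finite (p : ℕ) [Fact p.Prime] (R : Type*) [CommRing R] [IsNoetherianRing R]
    (hZp : ∀ m : ℤ, ¬ (p : ℤ) ∣ m → IsUnit (m : R))
    (hR : (p : R) ∈ nonZeroDivisors R)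
    (F : R ⧸ Ideal.span {(p : R)} →+* R ⧸ Ideal.span {(p : R)})
    (hF : ∀ x : R ⧸ Ideal.span {(p : R)}, F x = x ^ p) (hFfin : F.Finite)
    (n : ℕ) (hn : 1 ≤ n)
    (Φ : R ⧸ Ideal.span {(p : R)} →+*
      (TruncatedWittVector p n R) ⧸ Ideal.span {(p : TruncatedWittVector p n R)})
    (hΦ : ∀ a : R, Φ (Ideal.Quotient.mk _ a)
      = Ideal.Quotient.mk _ (WittVector.truncate n (WittVector.teichmuller p (a ^ p)))) :
    Φ.Finite := by
  choose m s hs using fun i : ℕ => exists_lifted_generators p F hF hFfin (i + 1)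
  let _ := Φ.toAlgebra
  set π : WittVector p R →+*
      (TruncatedWittVector p n R) ⧸ Ideal.span {(p : TruncatedWittVector p n R)} :=
    (Ideal.Quotient.mk _).comp (WittVector.truncate n) with hπ
  have hπp : π (p : WittVector p R) = 0 := by
    rw [hπ, RingHom.comp_apply, map_natCast, Ideal.Quotient.eq_zero_iff_mem]
    exact Ideal.mem_span_singleton_self _
  -- `Vⁱ` as an additive endomorphism, so that `map_sum` and `map_add` apply to it.
  have hadd : ∀ (i : ℕ) (x : WittVector p R),
      verschiebung^[i] x = 
        ((show AddMonoid.End (WittVector p R) from verschiebung) ^ i) x :=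
    fun i x => by rw [AddMonoid.End.coe_pow]; rfl
  let g : (Σ i : Fin n, Fin (m i)) →
      (TruncatedWittVector p n R) ⧸ Ideal.span {(p : TruncatedWittVector p n R)} :=
    fun q => π (verschiebung^[q.1] (teichmuller p (s q.1 q.2)))
  let M := Submodule.span (R ⧸ Ideal.span {(p : R)}) (Set.range g)
  -- Descending induction along the Verschiebung filtration, written as induction on `k = n - i`.
  have key : ∀ k i : ℕ, i + k = n → ∀ w : WittVector p R, π (verschiebung^[i] w) ∈ M := by
    intro k
    induction k with
    | zero =>
      intro i hi w
      have h0 : WittVector.truncate n (verschiebung^[i] w) = 0 := by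
        rw [← RingHom.mem_ker, WittVector.mem_ker_truncate]
        intro j hj
        exact iterate_verschiebung_coeff_eq_zero w (by omega)
      rw [hπ, RingHom.comp_apply, h0, map_zero]
      exact M.zero_mem
    | succ k ih =>
      intro i hi w
      obtain ⟨c, y, hcy⟩ := hs i (w.coeff 0)
      set u : WittVector p R :=
        ∑ j, teichmuller p (s i j) * teichmuller p (c j ^ p ^ (i + 1)) + teichmuller p y * p
        with hu
      have hcoeff : (w - u).coeff 0 = 0 := by
        change constantCoeff (w - u) = 0
        have e : ∀ r : R, constantCoeff (teichmuller p r) = r := fun r => rfl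
        have ew : constantCoeff w = w.coeff 0 := rfl
        rw [map_sub, ew, hcy, hu, map_add, map_sum, map_mul, map_natCast, e]
        simp only [map_mul, e, mul_comm, sub_self]
      have hV : w - u = verschiebung ((w - u).shift 1) :=
        eq_iterate_verschiebung (n := 1) (by intro j hj; obtain rfl : j = 0 := by omega
                                             exact hcoeff)
      have hterm : ∀ j, verschiebung^[i] (teichmuller p (s i j) * teichmuller p (c j ^ p ^ (i + 1)))
          = verschiebung^[i] (teichmuller p (s i j)) * teichmuller p (c j ^ p) := by
        intro j
        rw [iterate_verschiebung_mul_left, iterate_frobenius_teichmuller, ← pow_mul, ← pow_succ']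
      have hpy : verschiebung^[i] (teichmuller p y * (p : WittVector p R))
          = verschiebung^[i] (teichmuller p y) * p := by
        rw [iterate_verschiebung_mul_left, ← RingHom.coe_pow, map_natCast]
      have hdecomp : verschiebung^[i] w =
          ∑ j, verschiebung^[i] (teichmuller p (s i j)) * teichmuller p (c j ^ p)
            + verschiebung^[i] (teichmuller p y) * p
            + verschiebung^[i + 1] ((w - u).shift 1) := by
        rw [Function.iterate_succ_apply, ← hV, ← hpy]
        simp only [← hterm]
        simp only [hadd]
        rw [← map_sum, ← map_add, ← map_add, ← hu, add_sub_cancel]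
      rw [hdecomp, map_add, map_add, map_mul π _ (p : WittVector p R), hπp, mul_zero, add_zero,
        map_sum]
      refine M.add_mem (M.sum_mem fun j _ => ?_) (ih (i + 1) (by omega) _)
      have hsm : π (verschiebung^[i] (teichmuller p (s i j)) * teichmuller p (c j ^ p))
          = (Ideal.Quotient.mk (Ideal.span {(p : R)}) (c j)) • g ⟨⟨i, by omega⟩, j⟩ := by
        rw [Algebra.smul_def, map_mul, mul_comm]
        congr 1
        exact (hΦ (c j)).symm
      rw [hsm]
      exact M.smul_mem _ (Submodule.subset_span ⟨_, rfl⟩)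
  have htop : M = ⊤ := by
    rw [eq_top_iff]
    intro z _
    obtain ⟨t, rfl⟩ := Ideal.Quotient.mk_surjective z
    obtain ⟨w, rfl⟩ := WittVector.truncate_surjective p n R t
    exact key n 0 (by omega) w
  exact ⟨Submodule.fg_def.2 ⟨Set.range g, Set.finite_range g, htop⟩⟩
end

section
/- Let p be a prime and R a Noetherian commutative ℤ_(p)-algebra on which p is a nonzerodivisor, with R̄ := R/pR F-finite. For every integer n ≥ 1: if R̄ is n-quasi-F-split (i.e. Φ_{R̄,n} : R̄ → Q_{R̄,n} admits an R̄-linear left inverse), then R is n-quasi-F-split (i.e. Φ_{R,n} : R̄ → Q_{R,n} admits an R̄-linear left inverse). In particular sht(R) ≤ sht(R̄). -/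
/-!
The surjection `R → R̄ = R/pR` induces a ring homomorphism `W_n(R) → W_n(R̄)` which carries
`[a^p]` to `[ā^p]`, so `Φ_{R̄,n}` is the composite of `Φ_{R,n}` with `Q_{R,n} → Q_{R̄,n}`. Hence a
left inverse of `Φ_{R̄,n}` composed with `Q_{R,n} → Q_{R̄,n}` is a left inverse of `Φ_{R,n}`
(`IsNQuasiFSplit.of_mod_p`). The inequality of heights follows by comparing the two infima.
-/

/-- For a commutative `ℤ_(p)`-algebra `S`, the ring `S` is `n`-quasi-`F`-split if the
ring homomorphism `Φ_{S,n} : S̄ → Q_{S,n} = W_n(S)/pW_n(S)`, `a mod p ↦ [a^p] mod p`,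
admits an `S̄`-linear left inverse (where `Q_{S,n}` is an `S̄`-module via `Φ_{S,n}`).
Equivalently (composing with the surjection `W_n(S) → W_n(S)/pW_n(S)`; additive maps
to the characteristic-`p` ring `S̄` automatically kill `pW_n(S)`): there is an additive
map `σ : W_n(S) → S̄` which is `S̄`-semilinear for the `Φ`-action and satisfies
`σ([a^p]) = a mod p` for all `a : S`. -/
def IsNQuasiFSplit (p : ℕ) [Fact p.Prime] (S : Type*) [CommRing S] (n : ℕ) : Prop :=
  ∃ σ : TruncatedWittVector p n S → S ⧸ Ideal.span {(p : S)},
    (∀ x y : TruncatedWittVector p n S, σ (x + y) = σ x + σ y) ∧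
    (∀ (a : S) (x : TruncatedWittVector p n S),
      σ (WittVector.truncate n (WittVector.teichmuller p (a ^ p)) * x)
        = Ideal.Quotient.mk _ a * σ x) ∧
    (∀ a : S,
      σ (WittVector.truncate n (WittVector.teichmuller p (a ^ p)))
        = Ideal.Quotient.mk _ a)

/-- The quasi-`F`-splitting height `sht(S) ∈ ℕ ∪ {∞}`: the infimum of the `n ≥ 1` for
which `S` is `n`-quasi-`F`-split (`∞` if there is no such `n`). -/
noncomputable def sht (p : ℕ) [Fact p.Prime] (S : Type*) [CommRing S] : ℕ∞ :=
  sInf {k : ℕ∞ | ∃ n : ℕ, k = (n : ℕ∞) ∧ 1 ≤ n ∧ IsNQuasiFSplit p S n}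

/-- The map `W_n(S) → W_n(T)` induced by a ring homomorphism `f : S → T`, acting by `f` on each
coefficient; it is computed on the lift `x.out` of `x` to `W(S)` whose remaining coefficients
vanish. -/
noncomputable def truncMap (p : ℕ) [Fact p.Prime] {S T : Type*} [CommRing S] [CommRing T]
    (f : S →+* T) (n : ℕ) (x : TruncatedWittVector p n S) : TruncatedWittVector p n T :=
  WittVector.truncate n (WittVector.map f x.out)

/-- Naturality of truncation, which makes `truncMap` a ring homomorphism because truncation is
surjective. -/
lemma truncMap_truncate (p : ℕ) [Fact p.Prime] {S T : Type*} [CommRing S] [CommRing T]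
    (f : S →+* T) (n : ℕ) (x : WittVector p S) :
    truncMap p f n (WittVector.truncate n x) = WittVector.truncate n (WittVector.map f x) := by
  ext i
  simp [truncMap, WittVector.coeff_truncate, WittVector.map_coeff, TruncatedWittVector.coeff_out]

lemma truncMap_add (p : ℕ) [Fact p.Prime] {S T : Type*} [CommRing S] [CommRing T]
    (f : S →+* T) (n : ℕ) (x y : TruncatedWittVector p n S) :
    truncMap p f n (x + y) = truncMap p f n x + truncMap p f n y := by
  obtain ⟨x, rfl⟩ := WittVector.truncate_surjective p n S x
  obtain ⟨y, rfl⟩ := WittVector.truncate_surjective p n S y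
  simp only [← map_add, truncMap_truncate]

lemma truncMap_mul (p : ℕ) [Fact p.Prime] {S T : Type*} [CommRing S] [CommRing T]
    (f : S →+* T) (n : ℕ) (x y : TruncatedWittVector p n S) :
    truncMap p f n (x * y) = truncMap p f n x * truncMap p f n y := by
  obtain ⟨x, rfl⟩ := WittVector.truncate_surjective p n S x
  obtain ⟨y, rfl⟩ := WittVector.truncate_surjective p n S y
  simp only [← map_mul, truncMap_truncate]

lemma truncMap_teichmuller_pow (p : ℕ) [Fact p.Prime] {S T : Type*} [CommRing S] [CommRing T]
    (f : S →+* T) (n : ℕ) (a : S) :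
    truncMap p f n (WittVector.truncate n (WittVector.teichmuller p (a ^ p)))
      = WittVector.truncate n (WittVector.teichmuller p (f a ^ p)) := by
  rw [truncMap_truncate, WittVector.map_teichmuller, map_pow]

/-- A splitting for `S̄ = S/pS` pulls back to one for `S` along `W_n(S) → W_n(S̄)`, using the
identification `S̄/pS̄ = S̄`. -/
lemma IsNQuasiFSplit.of_mod_p (p : ℕ) [Fact p.Prime] (S : Type*) [CommRing S] (n : ℕ)
    (h : IsNQuasiFSplit p (S ⧸ Ideal.span {(p : S)}) n) : IsNQuasiFSplit p S n := by
  obtain ⟨σ, hadd, hmul, hone⟩ := h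
  have hp : (p : S ⧸ Ideal.span {(p : S)}) = 0 := by
    rw [← map_natCast (Ideal.Quotient.mk (Ideal.span {(p : S)})), Ideal.Quotient.eq_zero_iff_mem]
    exact Ideal.mem_span_singleton_self _
  -- the inverse of the canonical isomorphism `S̄ → S̄/pS̄`
  let e : (S ⧸ Ideal.span {(p : S)}) ⧸ Ideal.span {(p : S ⧸ Ideal.span {(p : S)})} →+*
      S ⧸ Ideal.span {(p : S)} :=
    Ideal.Quotient.lift _ (RingHom.id _) (by
      intro a ha
      rw [hp, Ideal.mem_span_singleton, zero_dvd_iff] at ha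
      simp [ha])
  have he : ∀ a, e (Ideal.Quotient.mk _ a) = a := fun a => Ideal.Quotient.lift_mk _ _ _
  refine ⟨fun x => e (σ (truncMap p (Ideal.Quotient.mk _) n x)), ?_, ?_, ?_⟩
  · intro x y
    beta_reduce
    rw [truncMap_add, hadd, map_add]
  · intro a x
    beta_reduce
    rw [truncMap_mul, truncMap_teichmuller_pow, hmul, map_mul, he]
  · intro a
    beta_reduce
    rw [truncMap_teichmuller_pow, hone, he]

/-- Let `p` be a prime and `R` a Noetherian commutative
`ℤ_(p)`-algebra on which `p` is a nonzerodivisor, with `R̄ := R/pR` `F`-finite.  For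
every `n ≥ 1`: if `R̄` is `n`-quasi-`F`-split then `R` is `n`-quasi-`F`-split.  In
particular `sht(R) ≤ sht(R̄)`. -/
theorem quasiFSplit_of_mod_p_quasiFSplit (p : ℕ) [Fact p.Prime] (R : Type*) [CommRing R]
    [IsNoetherianRing R]
    (hZp : ∀ m : ℤ, ¬ (p : ℤ) ∣ m → IsUnit (m : R))
    (hR : (p : R) ∈ nonZeroDivisors R)
    (F : R ⧸ Ideal.span {(p : R)} →+* R ⧸ Ideal.span {(p : R)})
    (hF : ∀ x : R ⧸ Ideal.span {(p : R)}, F x = x ^ p) (hFfin : F.Finite) :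
    (∀ n : ℕ, 1 ≤ n →
      IsNQuasiFSplit p (R ⧸ Ideal.span {(p : R)}) n → IsNQuasiFSplit p R n) ∧
    sht p R ≤ sht p (R ⧸ Ideal.span {(p : R)}) := by
  refine ⟨fun n _ h => h.of_mod_p, sInf_le_sInf ?_⟩
  rintro k ⟨n, hk, hn, h⟩
  exact ⟨n, hk, hn, h.of_mod_p⟩
end

section
/- Let (R, m) be a Noetherian local ring, let M be an R-module, and let f, g ∈ m. If the pair (f, g) is a regular sequence on M (i.e. f is a nonzerodivisor on M and g is a nonzerodivisor on M/fM) and M is f-adically separated (i.e. ⋂_{n≥1} f^nM = 0), then g is a nonzerodivisor on M. -/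
/-- Let `(R, m)` be a Noetherian local ring, `M` an `R`-module, and
`f g ∈ m`.  If `(f, g)` is a regular sequence on `M` (`f` is a nonzerodivisor on `M`
and `g` is a nonzerodivisor on `M/fM`) and `M` is `f`-adically separated
(`⋂ₙ fⁿM = 0`), then `g` is a nonzerodivisor on `M`. -/
theorem nonzerodivisor_of_regular_sequence_of_separated
    (R : Type*) [CommRing R] [IsNoetherianRing R] [IsLocalRing R]
    (M : Type*) [AddCommGroup M] [Module R M] (f g : R)
    (hf : f ∈ IsLocalRing.maximalIdeal R) (hg : g ∈ IsLocalRing.maximalIdeal R)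
    (hreg₁ : ∀ x : M, f • x = 0 → x = 0)
    (hreg₂ : ∀ x : M, (∃ y : M, g • x = f • y) → ∃ z : M, x = f • z)
    (hsep : ∀ x : M, (∀ n : ℕ, ∃ y : M, x = f ^ n • y) → x = 0) :
    ∀ x : M, g • x = 0 → x = 0 := by
  intro x hx
  -- The `g`-torsion is `f`-divisible within itself: if `g • x = 0` then `x = f • z`, and
  -- `f • g • z = 0` forces `g • z = 0`. Iterating puts `x` in every `fⁿM`.
  have key : ∀ n : ℕ, ∃ y : M, g • y = 0 ∧ x = f ^ n • y := by
    intro n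
    induction n with
    | zero => exact ⟨x, hx, by simp⟩
    | succ n ih =>
      obtain ⟨y, hy, hxy⟩ := ih
      obtain ⟨z, rfl⟩ := hreg₂ y ⟨0, by simp [hy]⟩
      refine ⟨z, hreg₁ _ ?_, ?_⟩
      · rw [smul_comm, hy]
      · rw [hxy, smul_smul, pow_succ]
  refine hsep x fun n => ?_
  obtain ⟨y, -, h⟩ := key n
  exact ⟨y, h⟩
end
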